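/- arXiv:1711.00211 — 8 statements merged into one kernel-verified Lean document; each statement's English description precedes it below -/
import Mathlib

section
/- Let d ≥ 3, let v be a unit vector in ℝ^d, let 0 < Θ < π/2, and let X ⊂ S^{d−1} be a compact set such that the spherical distance δ(u, v) ≤ Θ for all u ∈ X. Let X̃ = {u/⟨u,v⟩ : u ∈ X} be the radial projection of X into the hyperplane tangent to S^{d−1} at v. Then the (d−1)-dimensional Hausdorff measures satisfy H^{d−1}(X) ≥ (cos Θ)^d · H^{d−1}(X̃). -/
open scoped RealInnerProductSpace
open MeasureTheory

section RadialAux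

open Module Topology Set
open scoped NNReal ENNReal

variable {V : Type*} [NormedAddCommGroup V] [InnerProductSpace ℝ V] [FiniteDimensional ℝ V]
  [MeasurableSpace V] [BorelSpace V]

/-- the factor `√(1 + ‖y‖²)` -/
noncomputable def rhoAux {W : Type*} [NormedAddCommGroup W] (y : W) : ℝ := Real.sqrt (1 + ‖y‖ ^ 2)

/-- inverse gnomonic projection -/
noncomputable def psiAux (v : V) (y : (ℝ ∙ v)ᗮ) : V := (rhoAux y)⁻¹ • (v + (y : V))

lemma rhoAux_pos {W : Type*} [NormedAddCommGroup W] (y : W) : 0 < rhoAux y :=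
  Real.sqrt_pos.2 (by positivity)

lemma rhoAux_sq {W : Type*} [NormedAddCommGroup W] (y : W) : rhoAux y ^ 2 = 1 + ‖y‖ ^ 2 :=
  Real.sq_sqrt (by positivity)

lemma rhoAux_contDiff {W : Type*} [NormedAddCommGroup W] [InnerProductSpace ℝ W] :
    ContDiff ℝ 1 (fun y : W => (rhoAux y)⁻¹) := by
  refine ContDiff.inv ?_ (fun y => (rhoAux_pos y).ne')
  exact ContDiff.sqrt (contDiff_const.add (contDiff_norm_sq ℝ)) (fun y => by positivity)

lemma inner_orth (v : V) (y : (ℝ ∙ v)ᗮ) : ⟪v, (y : V)⟫ = 0 :=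
  Submodule.mem_orthogonal_singleton_iff_inner_right.1 y.2

lemma psiAux_inner (v : V) (hv : ‖v‖ = 1) (y : (ℝ ∙ v)ᗮ) :
    ⟪psiAux v y, v⟫ = (rhoAux y)⁻¹ := by
  rw [psiAux, inner_smul_left, inner_add_left, real_inner_self_eq_norm_sq, hv,
    real_inner_comm, inner_orth]
  simp

lemma psiAux_continuous (v : V) : Continuous (psiAux v) := by
  unfold psiAux
  exact rhoAux_contDiff.continuous.smul (by fun_prop)

lemma psiAux_back (v : V) (hv : ‖v‖ = 1) (y : (ℝ ∙ v)ᗮ) :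
    (⟪psiAux v y, v⟫)⁻¹ • psiAux v y = v + y := by
  rw [psiAux_inner v hv, psiAux, smul_smul, inv_inv, mul_inv_cancel₀ (rhoAux_pos y).ne', one_smul]

lemma psiAux_injective (v : V) (hv : ‖v‖ = 1) : Function.Injective (psiAux v) := by
  intro y z h
  have h1 := psiAux_back v hv y
  rw [h, psiAux_back v hv z] at h1
  exact Subtype.ext (add_left_cancel h1).symm

lemma exists_contraction (v : V) (hv : ‖v‖ = 1) (y₀ : (ℝ ∙ v)ᗮ) :
    ∃ G : V →L[ℝ] (ℝ ∙ v)ᗮ, LipschitzWith 1 G ∧ G (v + y₀) = 0 ∧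
      (G.comp (ℝ ∙ v)ᗮ.subtypeL).det = (rhoAux y₀)⁻¹ := by
  set ρ := rhoAux y₀ with hρ
  have hρ0 : 0 < ρ := rhoAux_pos _
  have hρ2 : ρ ^ 2 = 1 + ‖y₀‖ ^ 2 := rhoAux_sq _
  set w : V := (v + y₀) + ρ • v with hw
  have hvy := inner_orth v y₀
  have hvy' : ⟪(y₀ : V), v⟫ = 0 := by rw [real_inner_comm, hvy]
  have hvv : ⟪v, v⟫ = 1 := by rw [real_inner_self_eq_norm_sq, hv]; norm_num
  have hyy : ⟪(y₀ : V), (y₀ : V)⟫ = ρ ^ 2 - 1 := by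
    rw [real_inner_self_eq_norm_sq, hρ2]; simp
  have hww : ‖w‖ ^ 2 = 2 * ρ * (ρ + 1) := by
    rw [← real_inner_self_eq_norm_sq, hw]
    simp only [inner_add_left, inner_add_right, inner_smul_left, inner_smul_right, hvy, hvy', hvv,
      hyy, conj_trivial]
    ring
  let R : V ≃ₗᵢ[ℝ] V := (ℝ ∙ w).reflection
  have hR : ∀ x, R x = (2 * (⟪w, x⟫ / (2 * ρ * (ρ + 1)))) • w - x := by
    intro x
    have := Submodule.reflection_singleton_apply (𝕜 := ℝ) w x
    simp only [RCLike.ofReal_real_eq_id, id, hww] at this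
    rw [show R x = _ from this, mul_smul, two_smul, two_smul]
  let P : V →L[ℝ] (ℝ ∙ v)ᗮ := (ℝ ∙ v)ᗮ.orthogonalProjectionOnto
  have hPv : P v = 0 := by
    rw [Submodule.orthogonalProjectionOnto_eq_zero_iff]
    rw [Submodule.orthogonal_orthogonal]
    exact Submodule.mem_span_singleton_self v
  have hPy : ∀ y : (ℝ ∙ v)ᗮ, P y = y := fun y =>
    Submodule.orthogonalProjectionOnto_mem_subspace_eq_self y
  have hPw : P w = y₀ := by simp [hw, hPv, hPy]
  refine ⟨-(P.comp (R : V →L[ℝ] V)), ?_, ?_, ?_⟩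
  · have h1 : LipschitzWith 1 (fun x => P (R x)) := by
      have h0 := (Submodule.lipschitzWith_orthogonalProjectionOnto (ℝ ∙ v)ᗮ).comp R.lipschitz
      rw [one_mul] at h0
      exact h0
    have := h1.neg
    exact this
  · have : ⟪w, v + (y₀ : V)⟫ = ρ * (ρ + 1) := by
      rw [hw]
      simp only [inner_add_left, inner_add_right, inner_smul_left, hvy, hvy', hvv,
        hyy, conj_trivial]
      ring
    have h2 : R (v + y₀) = ρ • v := by
      rw [hR, this, show 2 * (ρ * (ρ + 1) / (2 * ρ * (ρ + 1))) = 1 by field_simp, hw]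
      simp
    change -(P (R (v + y₀))) = 0
    rw [h2, map_smul, hPv]; simp
  · let f : Module.Dual ℝ (ℝ ∙ v)ᗮ := (-(1 / (ρ * (ρ + 1)))) • (innerₗ (ℝ ∙ v)ᗮ y₀)
    have hL : (((-(P.comp (R : V →L[ℝ] V))).comp (ℝ ∙ v)ᗮ.subtypeL : (ℝ ∙ v)ᗮ →L[ℝ] (ℝ ∙ v)ᗮ) :
        (ℝ ∙ v)ᗮ →ₗ[ℝ] (ℝ ∙ v)ᗮ) = LinearMap.transvection f y₀ := by
      ext1 h
      have h3 : ⟪w, (h : V)⟫ = ⟪y₀, h⟫ := by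
        rw [hw]
        simp [inner_add_left, inner_smul_left, inner_orth v h]
      change -(P (R h)) = _
      rw [hR, map_sub, map_smul, hPw, hPy, h3, LinearMap.transvection.apply]
      simp only [f, LinearMap.smul_apply, innerₗ_apply_apply, smul_eq_mul]
      rw [neg_sub, sub_eq_add_neg, ← neg_smul]
      congr 2
      field_simp
    rw [ContinuousLinearMap.det, hL, LinearMap.transvection.det]
    simp only [f, LinearMap.smul_apply, innerₗ_apply_apply, smul_eq_mul]
    have : ⟪y₀, y₀⟫ = ρ ^ 2 - 1 := hyy
    rw [this]
    field_simp
    ring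

lemma local_estimate (v : V) (hv : ‖v‖ = 1) (y₀ : (ℝ ∙ v)ᗮ) (m : ℝ≥0)
    (hm : (m : ℝ≥0∞) < ENNReal.ofReal ((rhoAux y₀)⁻¹ ^ (finrank ℝ (ℝ ∙ v)ᗮ + 1))) :
    ∃ t ∈ 𝓝 y₀, ∀ s ⊆ t, (m : ℝ≥0∞) * μH[finrank ℝ (ℝ ∙ v)ᗮ] s ≤
      μH[finrank ℝ (ℝ ∙ v)ᗮ] (psiAux v '' s) := by
  obtain ⟨G, hG, hG0, hdet⟩ := exists_contraction v hv y₀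
  set L := G.comp (ℝ ∙ v)ᗮ.subtypeL with hL
  have hρ0 : 0 < (rhoAux y₀)⁻¹ := inv_pos.2 (rhoAux_pos _)
  have hg : ∀ y, G (psiAux v y) = (rhoAux y)⁻¹ • L (y - y₀) := by
    intro y
    have : v + (y : V) = (v + y₀) + ((y - y₀ : (ℝ ∙ v)ᗮ) : V) := by
      rw [Submodule.coe_sub]; abel
    rw [psiAux, map_smul, this, map_add, hG0, zero_add]
    rfl
  have hder : HasStrictFDerivAt (fun y => G (psiAux v y)) ((rhoAux y₀)⁻¹ • L) y₀ := by
    simp_rw [hg]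
    have h1 := (rhoAux_contDiff (W := (ℝ ∙ v)ᗮ)).contDiffAt.hasStrictFDerivAt (x := y₀) one_ne_zero
    have h2 : HasStrictFDerivAt (fun y => L (y - y₀)) L y₀ := by
      simpa using L.hasStrictFDerivAt.comp y₀ ((hasStrictFDerivAt_id y₀).sub_const y₀)
    have h3 := h1.smul h2
    rw [sub_self, map_zero, ContinuousLinearMap.smulRight_zero, add_zero] at h3
    exact h3
  have hdet2 : ((rhoAux y₀)⁻¹ • L).det = (rhoAux y₀)⁻¹ ^ (finrank ℝ (ℝ ∙ v)ᗮ + 1) := by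
    rw [ContinuousLinearMap.det, ContinuousLinearMap.toLinearMap_smul, LinearMap.det_smul, pow_succ]
    congr 1
  have hev := mul_le_addHaar_image_of_lt_det (μ := μH[finrank ℝ (ℝ ∙ v)ᗮ])
    ((rhoAux y₀)⁻¹ • L) (m := m) (by rw [hdet2, abs_of_pos (by positivity)]; exact hm)
  obtain ⟨δ, hδ, hδ0⟩ := (hev.and self_mem_nhdsWithin).exists
  obtain ⟨t, ht, hta⟩ := hder.approximates_deriv_on_nhds (c := δ) (Or.inr hδ0)
  refine ⟨t, ht, fun s hs => (hδ s _ (hta.mono_set hs)).trans ?_⟩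
  have h4 := hG.hausdorffMeasure_image_le (d := finrank ℝ (ℝ ∙ v)ᗮ) (by positivity) (psiAux v '' s)
  rw [image_image] at h4
  simpa using h4

lemma global_estimate (v : V) (hv : ‖v‖ = 1) (m : ℝ≥0) (Y : Set (ℝ ∙ v)ᗮ) (hY : IsCompact Y)
    (hm : ∀ y ∈ Y, (m : ℝ≥0∞) < ENNReal.ofReal ((rhoAux y)⁻¹ ^ (finrank ℝ (ℝ ∙ v)ᗮ + 1))) :
    (m : ℝ≥0∞) * μH[finrank ℝ (ℝ ∙ v)ᗮ] Y ≤ μH[finrank ℝ (ℝ ∙ v)ᗮ] (psiAux v '' Y) := by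
  have key : ∃ t, MeasurableSet t ∧ Y ⊆ t ∧ ∀ A ⊆ t, MeasurableSet A →
      (m : ℝ≥0∞) * μH[finrank ℝ (ℝ ∙ v)ᗮ] A ≤ μH[finrank ℝ (ℝ ∙ v)ᗮ] (psiAux v '' A) := by
    refine hY.induction_on (p := fun s => ∃ t, MeasurableSet t ∧ s ⊆ t ∧ ∀ A ⊆ t, MeasurableSet A →
      (m : ℝ≥0∞) * μH[finrank ℝ (ℝ ∙ v)ᗮ] A ≤ μH[finrank ℝ (ℝ ∙ v)ᗮ] (psiAux v '' A)) ?_ ?_ ?_ ?_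
    · refine ⟨∅, MeasurableSet.empty, subset_rfl, fun A hA _ => ?_⟩
      rw [subset_empty_iff.1 hA]; simp
    · rintro s t hst ⟨r, hr, htr, h⟩
      exact ⟨r, hr, hst.trans htr, h⟩
    · rintro s₁ s₂ ⟨t₁, ht₁, hs₁, h₁⟩ ⟨t₂, ht₂, hs₂, h₂⟩
      refine ⟨t₁ ∪ t₂, ht₁.union ht₂, union_subset_union hs₁ hs₂, fun A hA hAm => ?_⟩
      have e : psiAux v '' A = psiAux v '' (A ∩ t₁) ∪ psiAux v '' (A \ t₁) := by
        rw [← image_union, inter_union_sdiff]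
      have hd : Disjoint (psiAux v '' (A ∩ t₁)) (psiAux v '' (A \ t₁)) :=
        (disjoint_image_iff (psiAux_injective v hv)).2 disjoint_inf_sdiff
      have hmeas : MeasurableSet (psiAux v '' (A \ t₁)) :=
        (hAm.diff ht₁).image_of_continuousOn_injOn (psiAux_continuous v).continuousOn
          (psiAux_injective v hv).injOn
      rw [e, measure_union hd hmeas, ← measure_inter_add_sdiff A ht₁, mul_add]
      refine add_le_add (h₁ _ inter_subset_right (hAm.inter ht₁)) (h₂ _ ?_ (hAm.diff ht₁))
      rintro x ⟨hx, hx1⟩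
      exact (hA hx).resolve_left hx1
    · intro y hy
      obtain ⟨t, ht, h⟩ := local_estimate v hv y m (hm y hy)
      obtain ⟨u, hut, huo, hyu⟩ := mem_nhds_iff.1 ht
      exact ⟨u, mem_nhdsWithin_of_mem_nhds (huo.mem_nhds hyu), u, huo.measurableSet, subset_rfl,
        fun A hA _ => h A (hA.trans hut)⟩
  obtain ⟨t, _, hYt, h⟩ := key
  exact h Y hYt hY.measurableSet

end RadialAux

/-- Radial projection to the tangent hyperplane at `v`: if `X` is a compact subset of
`S^{d-1}` within spherical distance `Θ < π/2` of `v`, then its radial projection `X̃`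
to the tangent hyperplane at `v` satisfies `H^{d-1}(X) ≥ (cos Θ)^d · H^{d-1}(X̃)`. -/
theorem radial_projection_tangent (d : ℕ) (hd : 3 ≤ d)
    (v : EuclideanSpace ℝ (Fin d)) (hv : ‖v‖ = 1)
    (Θ : ℝ) (hΘ0 : 0 < Θ) (hΘ1 : Θ < Real.pi / 2)
    (X : Set (EuclideanSpace ℝ (Fin d)))
    (hXcompact : IsCompact X)
    (hXunit : ∀ u ∈ X, ‖u‖ = 1)
    (hXdist : ∀ u ∈ X, Real.arccos ⟪u, v⟫ ≤ Θ) :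
    ENNReal.ofReal (Real.cos Θ ^ d) *
        μH[(d : ℝ) - 1] ((fun u => (⟪u, v⟫)⁻¹ • u) '' X)
      ≤ μH[(d : ℝ) - 1] X := by
  have hcos : 0 < Real.cos Θ := Real.cos_pos_of_mem_Ioo ⟨by linarith, hΘ1⟩
  have hX : ∀ u ∈ X, Real.cos Θ ≤ ⟪u, v⟫ := by
    intro u hu
    have h1 : |⟪u, v⟫| ≤ 1 := by
      have := abs_real_inner_le_norm u v
      rwa [hXunit u hu, hv, one_mul] at this
    rw [abs_le] at h1
    rw [← Real.cos_arccos h1.1 h1.2]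
    exact Real.cos_le_cos_of_nonneg_of_le_pi (Real.arccos_nonneg _) (by linarith [Real.pi_pos])
      (hXdist u hu)
  have hv0 : v ≠ 0 := by rintro rfl; simp at hv
  have hfr : Module.finrank ℝ (ℝ ∙ v)ᗮ + 1 = d := by
    haveI : Fact (Module.finrank ℝ (EuclideanSpace ℝ (Fin d)) = (d - 1) + 1) :=
      ⟨by rw [finrank_euclideanSpace_fin]; omega⟩
    rw [Submodule.finrank_orthogonal_span_singleton (n := d - 1) hv0]; omega
  have hdim : (d : ℝ) - 1 = (Module.finrank ℝ (ℝ ∙ v)ᗮ : ℝ) := by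
    have := congrArg (Nat.cast (R := ℝ)) hfr
    push_cast at this; linarith
  have hvv : ⟪v, v⟫ = 1 := by rw [real_inner_self_eq_norm_sq, hv]; norm_num
  let F : EuclideanSpace ℝ (Fin d) → EuclideanSpace ℝ (Fin d) := fun u => (⟪u, v⟫)⁻¹ • u
  let P : EuclideanSpace ℝ (Fin d) → (ℝ ∙ v)ᗮ := fun u =>
    (ℝ ∙ v)ᗮ.orthogonalProjectionOnto (F u)
  have hP : ∀ u ∈ X, v + (P u : EuclideanSpace ℝ (Fin d)) = F u := by
    intro u hu
    have h0 : ⟪u, v⟫ ≠ 0 := (hcos.trans_le (hX u hu)).ne'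
    have hmem : F u - v ∈ (ℝ ∙ v)ᗮ := by
      rw [Submodule.mem_orthogonal_singleton_iff_inner_left, inner_sub_left, hvv]
      simp [F, inner_smul_left, h0]
    have hPv : (ℝ ∙ v)ᗮ.orthogonalProjectionOnto v = 0 := by
      rw [Submodule.orthogonalProjectionOnto_eq_zero_iff]
      rw [Submodule.orthogonal_orthogonal]
      exact Submodule.mem_span_singleton_self v
    have : P u = ⟨F u - v, hmem⟩ := by
      rw [← Submodule.orthogonalProjectionOnto_mem_subspace_eq_self
        (⟨F u - v, hmem⟩ : (ℝ ∙ v)ᗮ)]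
      simp [P, hPv]
    rw [this]; simp
  have hrho : ∀ u ∈ X, (rhoAux (P u))⁻¹ = ⟪u, v⟫ := by
    intro u hu
    have h0 : 0 < ⟪u, v⟫ := hcos.trans_le (hX u hu)
    have h1 : ‖F u‖ ^ 2 = 1 + ‖P u‖ ^ 2 := by
      rw [← hP u hu, norm_add_sq_real, inner_orth, hv]; simp
    have h2 : ‖F u‖ = (⟪u, v⟫)⁻¹ := by
      simp only [F]
      rw [norm_smul, hXunit u hu, mul_one, Real.norm_of_nonneg (by positivity)]
    rw [rhoAux, ← h1, Real.sqrt_sq (norm_nonneg _), h2, inv_inv]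
  have hpsi : ∀ u ∈ X, psiAux v (P u) = u := by
    intro u hu
    have h0 : ⟪u, v⟫ ≠ 0 := (hcos.trans_le (hX u hu)).ne'
    rw [psiAux, hrho u hu, hP u hu]
    simp only [F]
    rw [smul_smul, mul_inv_cancel₀ h0, one_smul]
  have hYc : IsCompact (P '' X) := by
    apply hXcompact.image_of_continuousOn
    apply ((ℝ ∙ v)ᗮ.orthogonalProjectionOnto).continuous.comp_continuousOn
    have hc : ContinuousOn (fun u : EuclideanSpace ℝ (Fin d) => ⟪u, v⟫) X := by fun_prop
    refine ContinuousOn.smul (hc.inv₀ ?_) continuousOn_id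
    exact fun u hu => (hcos.trans_le (hX u hu)).ne'
  have e1 : psiAux v '' (P '' X) = X := by
    rw [Set.image_image]
    conv_rhs => rw [← Set.image_id X]
    exact Set.image_congr hpsi
  have e2 : F '' X = (fun y : (ℝ ∙ v)ᗮ => v + (y : EuclideanSpace ℝ (Fin d))) '' (P '' X) := by
    rw [Set.image_image]
    exact (Set.image_congr hP).symm
  have hiso : Isometry (fun y : (ℝ ∙ v)ᗮ => v + (y : EuclideanSpace ℝ (Fin d))) :=
    (isometry_add_left v).comp isometry_subtype_coe
  change _ * μH[(d : ℝ) - 1] (F '' X) ≤ _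
  rw [e2, hiso.hausdorffMeasure_image (Or.inl (by rw [hdim]; positivity)), hdim]
  conv_rhs => rw [← e1]
  refine ENNReal.mul_le_of_forall_lt fun a ha b hb => ?_
  lift a to NNReal using ha.ne_top
  refine le_trans (mul_le_mul_right hb.le _) ?_
  refine global_estimate v hv a _ hYc ?_
  rintro _ ⟨u, hu, rfl⟩
  rw [hrho u hu, hfr]
  exact ha.trans_le (ENNReal.ofReal_le_ofReal (pow_le_pow_left₀ hcos.le (hX u hu) _))
end

section
/- Let d ≥ 3 and let u_0, …, u_d be unit vectors in ℝ^d such that the spherical distance δ(u_i, u_j) ≥ arccos(−1/d) − 2ε for all 0 ≤ i < j ≤ d, where 0 < ε < 1/(9·d^(3.5)). Then for all 0 ≤ i < j ≤ d one has −1/d − (3/2)·d·(d+1)·ε ≤ ⟨u_i, u_j⟩ ≤ −1/d + 2ε. -/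
open scoped RealInnerProductSpace

/-- For `d+1` unit vectors in `ℝ^d` with pairwise spherical distances at least
`arccos(-1/d) - 2ε` where `0 < ε < 1/(9 d^{3.5})`, all pairwise inner products lie in
`[-1/d - (3/2)d(d+1)ε, -1/d + 2ε]`. -/
theorem simplex_inner_bounds (d : ℕ) (hd : 3 ≤ d) (ε : ℝ)
    (hε0 : 0 < ε) (hε1 : ε < 1 / (9 * (d : ℝ) ^ (3.5 : ℝ)))
    (u : Fin (d + 1) → EuclideanSpace ℝ (Fin d))
    (hu : ∀ i, ‖u i‖ = 1)
    (hdist : ∀ i j : Fin (d + 1), i ≠ j →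
      Real.arccos (-1 / (d : ℝ)) - 2 * ε ≤ Real.arccos ⟪u i, u j⟫) :
    ∀ i j : Fin (d + 1), i ≠ j →
      -1 / (d : ℝ) - (3 / 2) * d * (d + 1) * ε ≤ ⟪u i, u j⟫ ∧
      ⟪u i, u j⟫ ≤ -1 / (d : ℝ) + 2 * ε := by
  have hd3 : (3 : ℝ) ≤ d := by exact_mod_cast hd
  have hε2 : ε < 1 / 9 := by
    refine hε1.trans_le ?_
    have : (1 : ℝ) ≤ (d : ℝ) ^ (3.5 : ℝ) :=
      Real.one_le_rpow (by linarith) (by norm_num)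
    exact one_div_le_one_div_of_le (by norm_num) (by linarith)
  have hinv : (1 : ℝ) / d ≤ 1 := by
    rw [div_le_one (by linarith)]; linarith
  have hneg : -1 / (d : ℝ) ≤ 0 := by
    rw [neg_div]; have : (0 : ℝ) ≤ 1 / d := by positivity
    linarith
  have hup : ∀ i j : Fin (d + 1), i ≠ j → ⟪u i, u j⟫ ≤ -1 / (d : ℝ) + 2 * ε := by
    intro i j hij
    have h := hdist i j hij
    have habs : |⟪u i, u j⟫| ≤ 1 := by
      have := abs_real_inner_le_norm (u i) (u j)
      rwa [hu i, hu j, mul_one] at this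
    have hpi : Real.pi / 2 ≤ Real.arccos (-1 / (d : ℝ)) := by
      have := Real.arccos_le_arccos hneg
      rwa [Real.arccos_zero] at this
    have h1 := Real.cos_le_cos_of_nonneg_of_le_pi
      (by linarith [Real.pi_gt_three]) (Real.arccos_le_pi _) h
    rw [Real.cos_arccos (abs_le.1 habs).1 (abs_le.1 habs).2] at h1
    have h2 := Real.abs_cos_sub_cos_le (Real.arccos (-1 / (d : ℝ)) - 2 * ε)
      (Real.arccos (-1 / (d : ℝ)))
    rw [Real.cos_arccos (by rw [neg_div]; linarith) (by linarith)] at h2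
    have h3 : |Real.arccos (-1 / (d : ℝ)) - 2 * ε - Real.arccos (-1 / (d : ℝ))| = 2 * ε := by
      rw [show Real.arccos (-1 / (d : ℝ)) - 2 * ε - Real.arccos (-1 / (d : ℝ)) = -(2 * ε) by ring,
        abs_neg, abs_of_pos (by linarith)]
    rw [h3] at h2
    linarith [(abs_le.1 h2).2]
  intro i j hij
  refine ⟨?_, hup i j hij⟩
  set c : ℝ := -1 / (d : ℝ) + 2 * ε with hc
  let g : Fin (d + 1) × Fin (d + 1) → ℝ :=
    fun p => (if p.1 = p.2 then 1 else c) - ⟪u p.1, u p.2⟫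
  have hg : ∀ p, 0 ≤ g p := by
    rintro ⟨a, b⟩
    by_cases hab : a = b
    · subst hab
      simp [g, hu]
    · simp only [g, hab, if_false]
      linarith [hup a b hab]
  have hsum0 : 0 ≤ ∑ p : Fin (d + 1) × Fin (d + 1), ⟪u p.1, u p.2⟫ := by
    have h := @real_inner_self_nonneg _ _ _ (∑ a, u a)
    rw [sum_inner] at h
    simp_rw [inner_sum] at h
    rwa [Fintype.sum_prod_type]
  have hite : ∑ p : Fin (d + 1) × Fin (d + 1), (if p.1 = p.2 then (1 : ℝ) else c)
      = (d + 1) * (1 + d * c) := by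
    rw [Fintype.sum_prod_type]
    have : ∀ a b : Fin (d + 1), (if a = b then (1 : ℝ) else c)
        = (if a = b then 1 - c else 0) + c := by
      intro a b; split_ifs <;> ring
    simp_rw [this, Finset.sum_add_distrib]
    simp
    ring
  have hdc : (1 : ℝ) + d * c = 2 * d * ε := by
    rw [hc]; field_simp; ring
  have htot : ∑ p, g p ≤ (d + 1) * (2 * d * ε) := by
    simp only [g, Finset.sum_sub_distrib]
    rw [hite, hdc]; linarith
  have hpair : g (i, j) + g (j, i) ≤ ∑ p, g p := by
    rw [← Finset.sum_pair (f := g) (by simp [hij])]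
    exact Finset.sum_le_sum_of_subset_of_nonneg (Finset.subset_univ _) (fun p _ _ => hg p)
  have e1 : g (i, j) = c - ⟪u i, u j⟫ := by simp [g, hij]
  have e2 : g (j, i) = c - ⟪u i, u j⟫ := by
    simp [g, hij.symm, real_inner_comm]
  have hpos : 0 ≤ (d : ℝ) * (d + 1) * ε := by positivity
  rw [e1, e2] at hpair
  nlinarith
end

section
/- Let d ≥ 2, let 0 < ε < 1/(64·d⁴), set s = sin(2ε), and let X ⊂ S^{d−1} be a finite set with |X| ≥ 2d such that the spherical distance δ(x,y) ≥ π/2 − 2ε for all distinct x, y ∈ X. Then for all distinct x, y ∈ X, either −1 ≤ ⟨x,y⟩ ≤ −1 + 1/(4d²) or −8d(d−1)·s ≤ ⟨x,y⟩ ≤ s; moreover, for every x ∈ X there exists exactly one y ∈ X with ⟨x,y⟩ ≤ −3/4. -/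
open scoped RealInnerProductSpace

section helpers

open Finset

/-- Upper bound for the Gram form. -/
lemma gram_upper {E : Type*} [NormedAddCommGroup E] [InnerProductSpace ℝ E]
    (X : Finset E) (s : ℝ) (hs : 0 ≤ s) (hu : ∀ x ∈ X, ‖x‖ = 1)
    (hp : ∀ x ∈ X, ∀ y ∈ X, x ≠ y → ⟪x, y⟫ ≤ s) (c : E → ℝ) :
    ‖∑ z ∈ X, c z • z‖ ^ 2 ≤ (2 + 2 * X.card * s) * ∑ z ∈ X, c z ^ 2 := by
  classical
  have expand : ∀ c : E → ℝ, ‖∑ z ∈ X, c z • z‖ ^ 2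
      = ∑ x ∈ X, ∑ y ∈ X, c x * c y * ⟪x, y⟫ := by
    intro c
    rw [← real_inner_self_eq_norm_sq, sum_inner]
    refine sum_congr rfl fun x _ => ?_
    rw [inner_sum]
    refine sum_congr rfl fun y _ => ?_
    rw [real_inner_smul_left, real_inner_smul_right]; ring
  have h0 : 0 ≤ ∑ x ∈ X, ∑ y ∈ X, |c x| * |c y| * ⟪x, y⟫ := by
    rw [← expand (fun z => |c z|)]; positivity
  have key : ∑ x ∈ X, ∑ y ∈ X, (c x * c y * ⟪x, y⟫ + |c x| * |c y| * ⟪x, y⟫) ≤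
      ∑ x ∈ X, ∑ y ∈ X, ((if x = y then 2 * c x ^ 2 else 0) + 2 * s * (|c x| * |c y|)) := by
    refine sum_le_sum fun x hx => sum_le_sum fun y hy => ?_
    split_ifs with h
    · subst h
      rw [real_inner_self_eq_norm_sq, hu x hx, abs_mul_abs_self]
      nlinarith [mul_nonneg hs (mul_self_nonneg (c x))]
    · have h1 := hp x hx y hy h
      rw [← abs_mul]
      have h2 : 0 ≤ c x * c y + |c x * c y| := by linarith [neg_abs_le (c x * c y)]
      have h3 := mul_le_mul_of_nonneg_left h1 h2
      have h4 : (c x * c y + |c x * c y|) * s ≤ (2 * |c x * c y|) * s :=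
        mul_le_mul_of_nonneg_right (by linarith [le_abs_self (c x * c y)]) hs
      linarith
  have e1 : ∑ x ∈ X, ∑ y ∈ X, ((if x = y then 2 * c x ^ 2 else 0) + 2 * s * (|c x| * |c y|))
      = 2 * ∑ x ∈ X, c x ^ 2 + 2 * s * (∑ x ∈ X, |c x|) ^ 2 := by
    simp only [sum_add_distrib]
    congr 1
    · rw [mul_sum]
      refine sum_congr rfl fun x hx => ?_
      simp [hx]
    · rw [sq, sum_mul_sum, mul_sum]
      refine sum_congr rfl fun x hx => ?_
      rw [mul_sum]
  have e2 : (∑ x ∈ X, |c x|) ^ 2 ≤ X.card * ∑ x ∈ X, c x ^ 2 := by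
    have := sq_sum_le_card_mul_sum_sq (s := X) (f := fun x => |c x|)
    simpa [sq_abs] using this
  have e3 := mul_le_mul_of_nonneg_left e2 (by positivity : 0 ≤ 2 * s)
  rw [e1] at key
  simp only [sum_add_distrib] at key
  rw [expand c]
  linarith

/-- Upper frame bound. -/
lemma frame_upper {E : Type*} [NormedAddCommGroup E] [InnerProductSpace ℝ E]
    (X : Finset E) (K : ℝ)
    (hK : ∀ c : E → ℝ, ‖∑ z ∈ X, c z • z‖ ^ 2 ≤ K * ∑ z ∈ X, c z ^ 2) (hK0 : 0 ≤ K) (v : E) :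
    ∑ z ∈ X, ⟪z, v⟫ ^ 2 ≤ K * ‖v‖ ^ 2 := by
  set q := ∑ z ∈ X, ⟪z, v⟫ ^ 2 with hq
  have h1 := hK (fun z => ⟪z, v⟫)
  set w := ∑ z ∈ X, ⟪z, v⟫ • z with hw
  have h2 : ⟪w, v⟫ = q := by
    rw [hw, sum_inner, hq]
    refine sum_congr rfl fun x _ => ?_
    rw [real_inner_smul_left]; ring
  have h3 : q ≤ ‖w‖ * ‖v‖ := h2 ▸ real_inner_le_norm w v
  have hq0 : 0 ≤ q := by positivity
  have h4 : q ^ 2 ≤ K * q * ‖v‖ ^ 2 := by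
    calc q ^ 2 ≤ (‖w‖ * ‖v‖) ^ 2 := by gcongr
      _ = ‖w‖ ^ 2 * ‖v‖ ^ 2 := by ring
      _ ≤ _ := by gcongr
  rcases hq0.eq_or_lt with h | h
  · rw [← h]; positivity
  · nlinarith

/-- Trace identity. -/
lemma frame_trace {d : ℕ} (X : Finset (EuclideanSpace ℝ (Fin d)))
    (hu : ∀ x ∈ X, ‖x‖ = 1) (b : OrthonormalBasis (Fin d) ℝ (EuclideanSpace ℝ (Fin d))) :
    ∑ i, ∑ z ∈ X, ⟪z, b i⟫ ^ 2 = X.card := by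
  rw [sum_comm]
  have : ∀ z ∈ X, ∑ i, ⟪z, b i⟫ ^ 2 = 1 := by
    intro z hz
    have := b.sum_sq_norm_inner_left z
    simp only [Real.norm_eq_abs, sq_abs] at this
    rw [this, hu z hz]; norm_num
  rw [sum_congr rfl this]; simp

lemma frame_lower {d : ℕ} (hd : 2 ≤ d) (X : Finset (EuclideanSpace ℝ (Fin d)))
    (hu : ∀ x ∈ X, ‖x‖ = 1) (K : ℝ)
    (hK : ∀ v, ∑ z ∈ X, ⟪z, v⟫ ^ 2 ≤ K * ‖v‖ ^ 2) (v : EuclideanSpace ℝ (Fin d)) :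
    (X.card - (d - 1) * K) * ‖v‖ ^ 2 ≤ ∑ z ∈ X, ⟪z, v⟫ ^ 2 := by
  have unit : ∀ v : EuclideanSpace ℝ (Fin d), ‖v‖ = 1 →
      (X.card - (d - 1) * K) ≤ ∑ z ∈ X, ⟪z, v⟫ ^ 2 := by
    intro v hv
    let i0 : Fin d := ⟨0, by omega⟩
    have ho : Orthonormal ℝ (({i0} : Set (Fin d)).domRestrict (fun _ => v)) := by
      constructor
      · intro i; exact hv
      · intro i j hij
        exact absurd (Subsingleton.elim i j) hij
    obtain ⟨b, hb⟩ := ho.exists_orthonormalBasis_extension_of_card_eq (by simp)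
    have hb0 : b i0 = v := hb i0 rfl
    have ht := frame_trace X hu b
    rw [← add_sum_erase _ _ (mem_univ i0), hb0] at ht
    have h2 : ∑ i ∈ univ.erase i0, ∑ z ∈ X, ⟪z, b i⟫ ^ 2 ≤ ∑ i ∈ univ.erase i0, K := by
      refine sum_le_sum fun i _ => ?_
      simpa using hK (b i)
    rw [sum_const, card_erase_of_mem (mem_univ _), card_univ, Fintype.card_fin, nsmul_eq_mul,
      Nat.cast_sub (by omega)] at h2
    push_cast at h2
    linarith
  by_cases h : v = 0
  · simp [h]
  · have hn : 0 < ‖v‖ := norm_pos_iff.2 h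
    have := unit (‖v‖⁻¹ • v) (by rw [norm_smul]; simp [hn.ne'])
    simp only [real_inner_smul_right, mul_pow, ← mul_sum] at this
    have h3 := mul_le_mul_of_nonneg_right this (sq_nonneg ‖v‖)
    refine h3.trans_eq ?_
    field_simp

/-- Polarization. -/
lemma frame_polar {E : Type*} [NormedAddCommGroup E] [InnerProductSpace ℝ E]
    (X : Finset E) (θ : ℝ)
    (hU : ∀ v, ∑ z ∈ X, ⟪z, v⟫ ^ 2 ≤ (2 + θ) * ‖v‖ ^ 2)
    (hL : ∀ v, (2 - θ) * ‖v‖ ^ 2 ≤ ∑ z ∈ X, ⟪z, v⟫ ^ 2) (x y : E) (hx : ‖x‖ = 1)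
    (hy : ‖y‖ = 1) :
    ∑ z ∈ X, ⟪z, x⟫ * ⟪z, y⟫ ≤ 2 * ⟪x, y⟫ + θ := by
  have h1 := hU (x + y)
  have h2 := hL (x - y)
  have h3 : ∑ z ∈ X, ⟪z, x + y⟫ ^ 2 - ∑ z ∈ X, ⟪z, x - y⟫ ^ 2
      = 4 * ∑ z ∈ X, ⟪z, x⟫ * ⟪z, y⟫ := by
    rw [← sum_sub_distrib, mul_sum]
    refine sum_congr rfl fun z _ => ?_
    rw [inner_add_right, inner_sub_right]; ring
  rw [norm_add_sq_real, hx, hy] at h1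
  rw [norm_sub_sq_real, hx, hy] at h2
  linarith

lemma prod_lower {a b s : ℝ} (hs : 0 ≤ s) (ha : a ≤ s) (hb : b ≤ s) (ha1 : -1 ≤ a)
    (hb1 : -1 ≤ b) : -s ≤ a * b := by
  rcases le_total 0 a with h | h <;> rcases le_total 0 b with h' | h' <;> nlinarith

/-- Local structure around one vector, in terms of the real numbers `a z = ⟪x, z⟫`. -/
lemma local_structure {E : Type*} [DecidableEq E] (Y : Finset E) (a : E → ℝ) (D s : ℝ)
    (hD : 2 ≤ D)
    (hs0 : 0 < s) (hs : s * (32 * D ^ 4) ≤ 1) (hcard : (Y.card : ℝ) = 2 * D - 1)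
    (ha : ∀ z ∈ Y, a z ≤ s) (ha1 : ∀ z ∈ Y, -1 ≤ a z)
    (hprod : ∀ y ∈ Y, ∀ z ∈ Y, y ≠ z → a y * a z ≤ (4 * D ^ 2 - 2 * D - 3) * s)
    (hsum : 1 - 4 * D * (D - 1) * s ≤ ∑ z ∈ Y, a z ^ 2) :
    ∃ y ∈ Y, a y ≤ -1 + 1 / (4 * D ^ 2) ∧
      ∀ z ∈ Y, z ≠ y → -(8 * D * (D - 1) * s) ≤ a z := by
  obtain ⟨p, hp⟩ : ∃ p, p = 1 / D ^ 2 := ⟨_, rfl⟩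
  have hDp : D ^ 2 * p = 1 := by rw [hp]; field_simp
  have hp0 : 0 < p := by rw [hp]; positivity
  have hp4 : p ≤ 1 / 4 := by
    have h4 : 4 ≤ D ^ 2 := by nlinarith
    have := mul_le_mul_of_nonneg_right h4 hp0.le
    linarith
  have hDp2 : D * p ≤ 1 / 2 := by nlinarith [mul_pos hp0 (by linarith : 0 < D)]
  have hsD : D ^ 2 * s ≤ p / 32 := by
    have : D ^ 2 * s = (s * (32 * D ^ 4)) * p / 32 := by
      linear_combination (-(D ^ 2 * s)) * hDp
    rw [this]; nlinarith
  obtain ⟨η, hη⟩ : ∃ η, η = (4 * D ^ 2 - 2 * D - 3) * s := ⟨_, rfl⟩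
  rw [← hη] at hprod
  have hsη : s ≤ η := by rw [hη]; nlinarith
  have hηp : η ≤ p / 8 := by rw [hη]; nlinarith
  have hη0 : 0 < η := by linarith
  have hθ : 4 * D * (D - 1) * s ≤ p / 8 := by nlinarith
  have hs1 : s ≤ 1 / 32 := by linarith
  have hne : Y.Nonempty := by
    rw [← card_pos]
    have : (0 : ℝ) < Y.card := by rw [hcard]; linarith
    exact_mod_cast this
  obtain ⟨y, hy, hmin⟩ := exists_min_image Y a hne
  have hcard' : ((Y.erase y).card : ℝ) = 2 * D - 2 := by
    rw [card_erase_of_mem hy, Nat.cast_sub (card_pos.2 hne), hcard]; push_cast; ring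
  rw [← add_sum_erase _ _ hy] at hsum
  have bound : ∀ t, (∀ z ∈ Y, z ≠ y → a z ^ 2 ≤ t) →
      ∑ z ∈ Y.erase y, a z ^ 2 ≤ (2 * D - 2) * t := by
    intro t ht
    have := sum_le_sum (s := Y.erase y) (f := fun z => a z ^ 2) (g := fun _ => t)
      (fun z hz => ht z (mem_of_mem_erase hz) (ne_of_mem_erase hz))
    rwa [sum_const, nsmul_eq_mul, hcard'] at this
  have b1 : ∑ z ∈ Y.erase y, a z ^ 2 ≤ (2 * D - 2) * η := by
    refine bound η fun z hz hzy => ?_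
    have h1 := hprod y hy z hz (Ne.symm hzy)
    have h2 := hmin z hz
    have h3 := ha z hz
    rcases le_total 0 (a z) with h | h
    · nlinarith
    · nlinarith
  have b2 : (2 * D - 2) * η ≤ 1 / 8 := by
    have : (2 * D - 2) * η ≤ (2 * D - 2) * (p / 8) :=
      mul_le_mul_of_nonneg_left hηp (by linarith)
    nlinarith
  have hay : a y ≤ -3 / 4 := by
    by_contra hcon
    push Not at hcon
    have := ha y hy
    have h2 : a y ^ 2 ≤ (3 / 4) ^ 2 := sq_le_sq' (by linarith) (by linarith)
    linarith
  have hz43 : ∀ z ∈ Y, z ≠ y → -(4 / 3 * η) ≤ a z := by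
    intro z hz hzy
    have h1 := hprod y hy z hz (Ne.symm hzy)
    by_contra hcon
    push Not at hcon
    have h2 : 0 ≤ (-3 / 4 - a y) * (-a z) := mul_nonneg (by linarith) (by linarith)
    linarith
  have b3 : ∑ z ∈ Y.erase y, a z ^ 2 ≤ (2 * D - 2) * (2 * η ^ 2) := by
    refine bound _ fun z hz hzy => ?_
    have h1 := hz43 z hz hzy
    have h3 := ha z hz
    have : a z ^ 2 ≤ (4 / 3 * η) ^ 2 := sq_le_sq' h1 (by linarith)
    nlinarith [sq_nonneg η]
  have b4 : (2 * D - 2) * (2 * η ^ 2) ≤ p / 32 := by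
    have e1 : η ^ 2 ≤ (p / 8) ^ 2 := by gcongr
    have e2 : (2 * D - 2) * (2 * η ^ 2) ≤ (2 * D - 2) * (2 * (p / 8) ^ 2) :=
      mul_le_mul_of_nonneg_left (by linarith) (by linarith)
    have e3 := mul_le_mul_of_nonneg_right hDp2 hp0.le
    have e4 := sq_nonneg p
    linarith
  refine ⟨y, hy, ?_, ?_⟩
  · have e : 1 / (4 * D ^ 2) = p / 4 := by rw [hp]; field_simp
    rw [e]
    have := ha1 y hy
    have h2 : 0 ≤ (1 + a y) * (-a y) := mul_nonneg (by linarith) (by linarith)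
    linarith
  · intro z hz hzy
    have h1 := hz43 z hz hzy
    have : 4 / 3 * η ≤ 8 * D * (D - 1) * s := by
      rw [hη]
      have h2 := mul_nonneg (sq_nonneg (D - 1)) hs0.le
      linarith
    linarith

end helpers

/-- Inner product dichotomy for near-optimal crosspolytope packings: if at least `2d`
unit vectors in `ℝ^d` have pairwise spherical distances at least `π/2 - 2ε` with
`0 < ε < 1/(64 d⁴)` and `s = sin 2ε`, then any two distinct vectors have inner product
either in `[-1, -1 + 1/(4d²)]` or in `[-8d(d-1)s, s]`, and each vector has exactly one
opposite vector (inner product at most `-3/4`). -/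
theorem crosspolytope_inner_dichotomy (d : ℕ) (hd : 2 ≤ d) (ε : ℝ)
    (hε0 : 0 < ε) (hε1 : ε < 1 / (64 * (d : ℝ) ^ 4))
    (X : Finset (EuclideanSpace ℝ (Fin d)))
    (hXcard : 2 * d ≤ X.card)
    (hXunit : ∀ x ∈ X, ‖x‖ = 1)
    (hdist : ∀ x ∈ X, ∀ y ∈ X, x ≠ y →
      Real.pi / 2 - 2 * ε ≤ Real.arccos ⟪x, y⟫) :
    (∀ x ∈ X, ∀ y ∈ X, x ≠ y →
      ((-1 ≤ ⟪x, y⟫ ∧ ⟪x, y⟫ ≤ -1 + 1 / (4 * (d : ℝ) ^ 2)) ∨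
       (-(8 * (d : ℝ) * ((d : ℝ) - 1) * Real.sin (2 * ε)) ≤ ⟪x, y⟫ ∧
        ⟪x, y⟫ ≤ Real.sin (2 * ε)))) ∧
    (∀ x ∈ X, ∃! y : EuclideanSpace ℝ (Fin d), y ∈ X ∧ ⟪x, y⟫ ≤ -3 / 4) := by
  classical
  have hD : (2 : ℝ) ≤ d := by exact_mod_cast hd
  have hs0 : 0 < Real.sin (2 * ε) := by
    apply Real.sin_pos_of_pos_of_lt_pi (by linarith)
    have h1 : (1 : ℝ) / (64 * (d : ℝ) ^ 4) ≤ 1 := by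
      rw [div_le_one (by positivity)]
      have : (1 : ℝ) ≤ (d : ℝ) ^ 4 := one_le_pow₀ (by linarith)
      linarith
    linarith [Real.pi_gt_three]
  have hs : Real.sin (2 * ε) * (32 * (d : ℝ) ^ 4) ≤ 1 := by
    have h1 := Real.sin_le (by linarith : 0 ≤ 2 * ε)
    rw [lt_div_iff₀ (by positivity)] at hε1
    have h2 := mul_le_mul_of_nonneg_right h1 (by positivity : 0 ≤ 32 * (d : ℝ) ^ 4)
    linarith
  have hin1 : ∀ x ∈ X, ∀ y ∈ X, -1 ≤ ⟪x, y⟫ ∧ ⟪x, y⟫ ≤ 1 := by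
    intro x hx y hy
    have := abs_real_inner_le_norm x y
    rw [hXunit x hx, hXunit y hy, mul_one] at this
    exact abs_le.1 this
  have hp : ∀ x ∈ X, ∀ y ∈ X, x ≠ y → ⟪x, y⟫ ≤ Real.sin (2 * ε) := by
    intro x hx y hy hxy
    have h1 := hdist x hx y hy hxy
    have h2 := hin1 x hx y hy
    have hle : 2 * ε ≤ Real.pi / 2 := by
      have h1 : (1 : ℝ) / (64 * (d : ℝ) ^ 4) ≤ 1 / 64 := by
        apply one_div_le_one_div_of_le (by norm_num)
        have : (1 : ℝ) ≤ (d : ℝ) ^ 4 := one_le_pow₀ (by linarith)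
        linarith
      linarith [Real.pi_gt_three]
    have h3 := Real.cos_le_cos_of_nonneg_of_le_pi (by linarith) (Real.arccos_le_pi _) h1
    rwa [Real.cos_arccos h2.1 h2.2, Real.cos_pi_div_two_sub] at h3
  generalize Real.sin (2 * ε) = s at *
  have hU0 := frame_upper X _ (gram_upper X s hs0.le hXunit hp) (by positivity)
  have hds : (d : ℝ) * s * 64 ≤ 1 / 4 := by
    have h3 : (8 : ℝ) ≤ (d : ℝ) ^ 3 := by
      calc (8 : ℝ) = 2 ^ 3 := by norm_num
        _ ≤ _ := by gcongr
    have : (d : ℝ) * s * 8 ≤ (d : ℝ) * s * (d : ℝ) ^ 3 := by gcongr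
    nlinarith
  have hd2s : (d : ℝ) * d * s * 32 ≤ 1 / 4 := by
    have h3 : (4 : ℝ) ≤ (d : ℝ) ^ 2 := by nlinarith
    have : (d : ℝ) * d * s * 4 ≤ (d : ℝ) * d * s * (d : ℝ) ^ 2 := by gcongr
    nlinarith
  have hcard : X.card = 2 * d := by
    refine le_antisymm ?_ hXcard
    have ht := frame_trace X hXunit (EuclideanSpace.basisFun (Fin d) ℝ)
    have h2 := Finset.sum_le_sum (s := Finset.univ)
      (fun i _ => hU0 (EuclideanSpace.basisFun (Fin d) ℝ i))
    rw [ht] at h2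
    simp only [OrthonormalBasis.norm_eq_one, Finset.sum_const, Finset.card_univ,
      Fintype.card_fin, nsmul_eq_mul] at h2
    by_contra hcon
    have h3 : 2 * d + 1 ≤ X.card := by omega
    have h4 : (2 * d + 1 : ℝ) ≤ X.card := by exact_mod_cast h3
    have h5 : (2 * d + 1 : ℝ) * (1 - 2 * (d * s)) ≤ X.card * (1 - 2 * (d * s)) :=
      mul_le_mul_of_nonneg_right h4 (by linarith)
    nlinarith
  have hcR : (X.card : ℝ) = 2 * d := by rw [hcard]; push_cast; ring
  rw [hcR] at hU0
  have hL0 := frame_lower hd X hXunit _ hU0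
  rw [hcR] at hL0
  obtain ⟨θ, hθ⟩ : ∃ θ : ℝ, θ = 4 * d * (d - 1) * s := ⟨_, rfl⟩
  have hU : ∀ v, ∑ z ∈ X, ⟪z, v⟫ ^ 2 ≤ (2 + θ) * ‖v‖ ^ 2 := by
    intro v
    refine (hU0 v).trans (mul_le_mul_of_nonneg_right ?_ (by positivity))
    rw [hθ]
    nlinarith [mul_nonneg (mul_nonneg (by linarith : (0 : ℝ) ≤ d) hs0.le)
      (by linarith : (0 : ℝ) ≤ (d : ℝ) - 2)]
  have hL : ∀ v, (2 - θ) * ‖v‖ ^ 2 ≤ ∑ z ∈ X, ⟪z, v⟫ ^ 2 := by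
    intro v
    refine le_trans (le_of_eq ?_) (hL0 v)
    rw [hθ]; ring
  have main : ∀ x ∈ X, ∃ y ∈ X.erase x, ⟪x, y⟫ ≤ -1 + 1 / (4 * (d : ℝ) ^ 2) ∧
      ∀ z ∈ X.erase x, z ≠ y → -(8 * (d : ℝ) * (d - 1) * s) ≤ ⟪x, z⟫ := by
    intro x hx
    refine local_structure (X.erase x) (fun z => ⟪x, z⟫) d s hD hs0 hs ?_ ?_ ?_ ?_ ?_
    · rw [Finset.card_erase_of_mem hx, Nat.cast_sub (Finset.card_pos.2 ⟨x, hx⟩), hcR]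
      push_cast; ring
    · intro z hz
      exact hp x hx z (Finset.mem_of_mem_erase hz) (Finset.ne_of_mem_erase hz).symm
    · intro z hz
      exact (hin1 x hx z (Finset.mem_of_mem_erase hz)).1
    · intro y hy z hz hyz
      obtain ⟨hyx, hyX⟩ := Finset.mem_erase.1 hy
      obtain ⟨hzx, hzX⟩ := Finset.mem_erase.1 hz
      have h1 := frame_polar X θ hU hL y z (hXunit y hyX) (hXunit z hzX)
      have hz' : z ∈ X.erase y := Finset.mem_erase.2 ⟨hyz.symm, hzX⟩
      have hx' : x ∈ (X.erase y).erase z :=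
        Finset.mem_erase.2 ⟨hzx.symm, Finset.mem_erase.2 ⟨hyx.symm, hx⟩⟩
      rw [← Finset.add_sum_erase _ _ hyX, ← Finset.add_sum_erase _ _ hz',
        ← Finset.add_sum_erase _ _ hx', real_inner_self_eq_norm_sq,
        real_inner_self_eq_norm_sq, hXunit y hyX, hXunit z hzX, real_inner_comm y z] at h1
      have h2 : ∑ w ∈ ((X.erase y).erase z).erase x, (-s) ≤
          ∑ w ∈ ((X.erase y).erase z).erase x, ⟪w, y⟫ * ⟪w, z⟫ := by
        refine Finset.sum_le_sum fun w hw => ?_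
        simp only [Finset.mem_erase] at hw
        obtain ⟨_, hwz, hwy, hwX⟩ := hw
        exact prod_lower hs0.le (hp w hwX y hyX hwy) (hp w hwX z hzX hwz)
          (hin1 w hwX y hyX).1 (hin1 w hwX z hzX).1
      rw [Finset.sum_const, nsmul_eq_mul, Finset.card_erase_of_mem hx',
        Finset.card_erase_of_mem hz', Finset.card_erase_of_mem hyX, hcard] at h2
      have h3 : ((2 * d - 1 - 1 - 1 : ℕ) : ℝ) = 2 * d - 3 := by
        rw [show 2 * d - 1 - 1 - 1 = 2 * d - 3 by omega, Nat.cast_sub (by omega)]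
        push_cast; ring
      rw [h3] at h2
      rw [hθ] at h1
      show ⟪x, y⟫ * ⟪x, z⟫ ≤ _
      have hc : ⟪z, y⟫ = ⟪y, z⟫ := real_inner_comm y z
      linarith
    · have h1 := hL x
      rw [← Finset.add_sum_erase _ _ hx, real_inner_self_eq_norm_sq, hXunit x hx, hθ] at h1
      have h2 : ∑ z ∈ X.erase x, ⟪x, z⟫ ^ 2 = ∑ z ∈ X.erase x, ⟪z, x⟫ ^ 2 :=
        Finset.sum_congr rfl fun z _ => by rw [real_inner_comm]
      show _ ≤ ∑ z ∈ X.erase x, ⟪x, z⟫ ^ 2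
      rw [h2]
      linarith
  refine ⟨?_, ?_⟩
  · intro x hx y hy hxy
    obtain ⟨o, ho, ho1, ho2⟩ := main x hx
    by_cases h : y = o
    · subst h
      exact Or.inl ⟨(hin1 x hx y hy).1, ho1⟩
    · exact Or.inr ⟨ho2 y (Finset.mem_erase.2 ⟨hxy.symm, hy⟩) h, hp x hx y hy hxy⟩
  · intro x hx
    obtain ⟨o, ho, ho1, ho2⟩ := main x hx
    refine ⟨o, ⟨Finset.mem_of_mem_erase ho, ?_⟩, ?_⟩
    · have : 1 / (4 * (d : ℝ) ^ 2) ≤ 1 / 4 := by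
        apply one_div_le_one_div_of_le (by norm_num)
        nlinarith
      linarith
    · rintro y ⟨hy, hy1⟩
      by_contra h
      have hyx : y ≠ x := by
        rintro rfl
        rw [real_inner_self_eq_norm_sq, hXunit y hy] at hy1
        norm_num at hy1
      have := ho2 y (Finset.mem_erase.2 ⟨hyx, hy⟩) h
      nlinarith [mul_nonneg (by linarith : (0 : ℝ) ≤ d) hs0.le]
end

section
/- Let d ≥ 2, let 0 < ε < 1/(64·d⁴), set s = sin(2ε), and let X ⊂ S^{d−1} be a finite set with |X| ≥ 2d such that the spherical distance δ(x,y) ≥ π/2 − 2ε for all distinct x, y ∈ X. If x, y ∈ X satisfy ⟨x, y⟩ ≤ −3/4, then δ(y, −x) ≤ 32·d²·(d−1)·s. -/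
open scoped RealInnerProductSpace

lemma inner_coord {d : ℕ} (v w : EuclideanSpace ℝ (Fin d)) : ⟪v, w⟫ = ∑ k, v k * w k := by
  simp [PiLp.inner_apply, mul_comm]

lemma frame_sq {d : ℕ} (Y : Finset (EuclideanSpace ℝ (Fin d))) :
    ∑ k, ∑ l, (∑ v ∈ Y, v k * v l) ^ 2 = ∑ v ∈ Y, ∑ w ∈ Y, ⟪v, w⟫ ^ 2 := by
  have h1 : ∀ v w : EuclideanSpace ℝ (Fin d),
      ⟪v, w⟫ ^ 2 = ∑ k, ∑ l, (v k * v l) * (w k * w l) := by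
    intro v w
    rw [inner_coord, sq, Finset.sum_mul_sum]
    refine Finset.sum_congr rfl fun k _ => Finset.sum_congr rfl fun l _ => by ring
  have h2 : ∀ k l : Fin d, (∑ v ∈ Y, v k * v l) ^ 2
      = ∑ v ∈ Y, ∑ w ∈ Y, (v k * v l) * (w k * w l) := by
    intro k l
    rw [sq, Finset.sum_mul_sum]
  simp only [h1, h2]
  calc ∑ k, ∑ l, ∑ v ∈ Y, ∑ w ∈ Y, (v k * v l) * (w k * w l)
      = ∑ k, ∑ v ∈ Y, ∑ l, ∑ w ∈ Y, (v k * v l) * (w k * w l) :=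
        Finset.sum_congr rfl fun k _ => Finset.sum_comm
    _ = ∑ v ∈ Y, ∑ k, ∑ l, ∑ w ∈ Y, (v k * v l) * (w k * w l) := Finset.sum_comm
    _ = ∑ v ∈ Y, ∑ k, ∑ w ∈ Y, ∑ l, (v k * v l) * (w k * w l) :=
        Finset.sum_congr rfl fun v _ => Finset.sum_congr rfl fun k _ => Finset.sum_comm
    _ = _ := Finset.sum_congr rfl fun v _ => Finset.sum_comm

/-- The squared Frobenius distance of the frame operator to twice the identity. -/
lemma frame_identity {d : ℕ} (Y : Finset (EuclideanSpace ℝ (Fin d)))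
    (hY : ∀ v ∈ Y, ‖v‖ = 1) :
    ∑ k, ∑ l, ((∑ v ∈ Y, v k * v l) - 2 * (if k = l then 1 else 0)) ^ 2
      = (∑ v ∈ Y, ∑ w ∈ Y, ⟪v, w⟫ ^ 2) - 4 * (Y.card : ℝ) + 4 * (d : ℝ) := by
  have h : ∀ k l : Fin d, ((∑ v ∈ Y, v k * v l) - 2 * (if k = l then (1 : ℝ) else 0)) ^ 2
      = (∑ v ∈ Y, v k * v l) ^ 2 + if k = l then (4 - 4 * ∑ v ∈ Y, v k * v l) else 0 := by
    intro k l
    split_ifs <;> ring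
  simp only [h, Finset.sum_add_distrib, frame_sq, Finset.sum_ite_eq, Finset.mem_univ, if_true,
    Finset.sum_sub_distrib, ← Finset.mul_sum]
  rw [Finset.sum_comm (s := Finset.univ) (t := Y)]
  have : ∀ v ∈ Y, ∑ k, v k * v k = 1 := by
    intro v hv
    rw [← inner_coord, real_inner_self_eq_norm_sq, hY v hv]; norm_num
  rw [Finset.sum_congr rfl this]
  simp
  ring

lemma frame_lower_s15 {d : ℕ} (Y : Finset (EuclideanSpace ℝ (Fin d)))
    (e : EuclideanSpace ℝ (Fin d))
    (hF : ∑ k, ∑ l, ((∑ v ∈ Y, v k * v l) - 2 * (if k = l then (1 : ℝ) else 0)) ^ 2 ≤ 1 / 16) :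
    7 / 4 * ‖e‖ ^ 2 ≤ ∑ v ∈ Y, ⟪e, v⟫ ^ 2 := by
  set M : Fin d → Fin d → ℝ :=
    fun k l => (∑ v ∈ Y, v k * v l) - 2 * (if k = l then (1 : ℝ) else 0) with hM
  have hn : ‖e‖ ^ 2 = ∑ k, e k * e k := by
    rw [← inner_coord, real_inner_self_eq_norm_sq]
  have hq : ∑ k, ∑ l, M k l * (e k * e l) = (∑ v ∈ Y, ⟪e, v⟫ ^ 2) - 2 * ‖e‖ ^ 2 := by
    have h1 : ∀ k l : Fin d, M k l * (e k * e l)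
        = (∑ v ∈ Y, (e k * v k) * (e l * v l)) - if k = l then 2 * (e k * e l) else 0 := by
      intro k l
      have : (∑ v ∈ Y, (e k * v k) * (e l * v l)) = (∑ v ∈ Y, v k * v l) * (e k * e l) := by
        rw [Finset.sum_mul]
        exact Finset.sum_congr rfl fun v _ => by ring
      rw [this]
      simp only [hM]
      split_ifs <;> ring
    simp only [h1, Finset.sum_sub_distrib, Finset.sum_ite_eq, Finset.mem_univ, if_true,
      ← Finset.mul_sum, hn]
    congr 1
    have h2 : ∀ v : EuclideanSpace ℝ (Fin d),
        ⟪e, v⟫ ^ 2 = ∑ k, ∑ l, (e k * v k) * (e l * v l) := by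
      intro v
      rw [inner_coord, sq, Finset.sum_mul_sum]
    simp only [h2]
    rw [Finset.sum_comm (s := Y)]
    exact Finset.sum_congr rfl fun k _ => Finset.sum_comm
  have hcs : (∑ k, ∑ l, M k l * (e k * e l)) ^ 2 ≤ (1 / 16) * (‖e‖ ^ 2) ^ 2 := by
    have := Finset.sum_mul_sq_le_sq_mul_sq (Finset.univ : Finset (Fin d × Fin d))
      (fun p => M p.1 p.2) (fun p => e p.1 * e p.2)
    simp only [Fintype.sum_prod_type] at this
    have h3 : ∑ k, ∑ l, (e k * e l) ^ 2 = (‖e‖ ^ 2) ^ 2 := by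
      rw [hn, sq (∑ k, e k * e k), Finset.sum_mul_sum]
      refine Finset.sum_congr rfl fun k _ => Finset.sum_congr rfl fun l _ => by ring
    rw [h3] at this
    exact this.trans (mul_le_mul_of_nonneg_right hF (by positivity))
  have habs : |∑ k, ∑ l, M k l * (e k * e l)| ≤ 1 / 4 * ‖e‖ ^ 2 :=
    abs_le_of_sq_le_sq (by linarith [hcs, (by ring : (1 / 4 * ‖e‖ ^ 2) ^ 2 = (1 / 16) * (‖e‖ ^ 2) ^ 2)]) (by positivity)
  rw [hq] at habs
  have := (abs_le.1 habs).1
  linarith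

lemma gram_bounds {d : ℕ} (Y : Finset (EuclideanSpace ℝ (Fin d)))
    (hcard : Y.card = 2 * d) (s : ℝ) (hs : 0 ≤ s)
    (hY : ∀ v ∈ Y, ‖v‖ = 1) (hin : ∀ v ∈ Y, ∀ w ∈ Y, v ≠ w → ⟪v, w⟫ ≤ s) :
    (∑ k, ∑ l, ((∑ v ∈ Y, v k * v l) - 2 * (if k = l then (1 : ℝ) else 0)) ^ 2
        ≤ 4 * (d : ℝ) ^ 2 * (s + s ^ 2)) ∧
    ∀ v ∈ Y, ∀ w ∈ Y, v ≠ w → - ⟪v, w⟫ - ⟪v, w⟫ ^ 2 ≤ 2 * (d : ℝ) ^ 2 * (s + s ^ 2) := by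
  classical
  set F := ∑ k, ∑ l, ((∑ v ∈ Y, v k * v l) - 2 * (if k = l then (1 : ℝ) else 0)) ^ 2 with hFdef
  have hF0 : 0 ≤ F := by positivity
  have hFid := frame_identity Y hY
  rw [← hFdef] at hFid
  have hcR : (Y.card : ℝ) = 2 * d := by rw [hcard]; push_cast; ring
  -- nonnegative defect terms
  set t : EuclideanSpace ℝ (Fin d) → EuclideanSpace ℝ (Fin d) → ℝ :=
    fun v w => if v = w then 0 else s + s ^ 2 - ⟪v, w⟫ - ⟪v, w⟫ ^ 2 with ht
  have ht0 : ∀ v ∈ Y, ∀ w ∈ Y, 0 ≤ t v w := by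
    intro v hv w hw
    simp only [ht]
    split_ifs with h
    · exact le_rfl
    · have h1 := hin v hv w hw h
      have h2 : -1 ≤ ⟪v, w⟫ := by
        have := abs_real_inner_le_norm v w
        rw [hY v hv, hY w hw] at this
        linarith [(abs_le.1 this).1]
      nlinarith
  have hsum0 : 0 ≤ ∑ v ∈ Y, ∑ w ∈ Y, ⟪v, w⟫ := by
    have : ∑ v ∈ Y, ∑ w ∈ Y, ⟪v, w⟫ = ⟪∑ v ∈ Y, v, ∑ w ∈ Y, w⟫ := by
      rw [sum_inner]
      exact Finset.sum_congr rfl fun v _ => by rw [inner_sum]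
    rw [this]
    exact real_inner_self_nonneg
  have htsum : ∑ v ∈ Y, ∑ w ∈ Y, t v w ≤ 4 * (d : ℝ) ^ 2 * (s + s ^ 2) - F := by
    have h1 : ∀ v ∈ Y, ∀ w ∈ Y, t v w
        = (s + s ^ 2) - ⟪v, w⟫ - ⟪v, w⟫ ^ 2 + if v = w then 2 - (s + s ^ 2) else 0 := by
      intro v hv w hw
      simp only [ht]
      split_ifs with h
      · subst h
        rw [real_inner_self_eq_norm_sq, hY v hv]; ring
      · ring
    rw [Finset.sum_congr rfl fun v hv => Finset.sum_congr rfl fun w hw => h1 v hv w hw]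
    have h2 : ∑ v ∈ Y, ∑ w ∈ Y, (if v = w then 2 - (s + s ^ 2) else 0)
        = 2 * d * (2 - (s + s ^ 2)) := by
      have : ∀ v ∈ Y, ∑ w ∈ Y, (if v = w then 2 - (s + s ^ 2) else 0) = 2 - (s + s ^ 2) := by
        intro v hv
        rw [Finset.sum_ite_eq, if_pos hv]
      rw [Finset.sum_congr rfl this, Finset.sum_const, nsmul_eq_mul, hcR]
    simp only [Finset.sum_add_distrib, Finset.sum_sub_distrib, h2, Finset.sum_const,
      nsmul_eq_mul, hcR]
    rw [hcR] at hFid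
    have : 0 ≤ (d : ℝ) * (s + s ^ 2) := by positivity
    nlinarith
  have htot0 : 0 ≤ ∑ v ∈ Y, ∑ w ∈ Y, t v w :=
    Finset.sum_nonneg fun v hv => Finset.sum_nonneg fun w hw => ht0 v hv w hw
  refine ⟨by linarith, ?_⟩
  intro v hv w hw hvw
  have hrow : ∀ a ∈ Y, ∀ b ∈ Y, t a b ≤ ∑ c ∈ Y, t a c := fun a ha b hb =>
    Finset.single_le_sum (f := fun c => t a c) (fun c hc => ht0 a ha c hc) hb
  have htwo : (∑ c ∈ Y, t v c) + (∑ c ∈ Y, t w c) ≤ ∑ a ∈ Y, ∑ c ∈ Y, t a c := by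
    have hsub : ({v, w} : Finset _) ⊆ Y := by
      intro a ha
      simp at ha
      rcases ha with rfl | rfl <;> assumption
    have := Finset.sum_le_sum_of_subset_of_nonneg (f := fun a => ∑ c ∈ Y, t a c) hsub
      (fun a ha _ => Finset.sum_nonneg fun c hc => ht0 a ha c hc)
    rwa [Finset.sum_pair hvw] at this
  have e1 := hrow v hv w hw
  have e2 := hrow w hw v hv
  simp only [ht, if_neg hvw, if_neg hvw.symm] at e1 e2
  rw [real_inner_comm v w] at e2
  have : 0 ≤ s + s ^ 2 := by positivity
  linarith

set_option maxHeartbeats 1000000 in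
/-- Opposite vectors are nearly antipodal: if at least `2d` unit vectors in `ℝ^d` have
pairwise spherical distances at least `π/2 - 2ε` with `0 < ε < 1/(64 d⁴)` and
`s = sin 2ε`, and `x, y ∈ X` satisfy `⟨x,y⟩ ≤ -3/4`, then `δ(y, -x) ≤ 32 d² (d-1) s`. -/
theorem opposite_nearly_antipodal (d : ℕ) (hd : 2 ≤ d) (ε : ℝ)
    (hε0 : 0 < ε) (hε1 : ε < 1 / (64 * (d : ℝ) ^ 4))
    (X : Finset (EuclideanSpace ℝ (Fin d)))
    (hXcard : 2 * d ≤ X.card)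
    (hXunit : ∀ x ∈ X, ‖x‖ = 1)
    (hdist : ∀ x ∈ X, ∀ y ∈ X, x ≠ y →
      Real.pi / 2 - 2 * ε ≤ Real.arccos ⟪x, y⟫)
    (x y : EuclideanSpace ℝ (Fin d)) (hx : x ∈ X) (hy : y ∈ X)
    (hopp : ⟪x, y⟫ ≤ -3 / 4) :
    Real.arccos ⟪y, -x⟫ ≤ 32 * (d : ℝ) ^ 2 * ((d : ℝ) - 1) * Real.sin (2 * ε) := by
  classical
  have hdR : (2 : ℝ) ≤ d := by exact_mod_cast hd
  have hd2 : (4 : ℝ) ≤ (d : ℝ) ^ 2 := by nlinarith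
  have hd4 : (16 : ℝ) ≤ (d : ℝ) ^ 4 := by nlinarith
  have hεd : ε * (64 * (d : ℝ) ^ 4) < 1 := (lt_div_iff₀ (by positivity)).1 hε1
  have hεsmall : 2 * ε ≤ 1 / 512 := by nlinarith
  have hpi := Real.pi_gt_three
  set s := Real.sin (2 * ε) with hsdef
  have hs0 : 0 < s := Real.sin_pos_of_pos_of_lt_pi (by linarith) (by linarith)
  have hsε : s ≤ 2 * ε := Real.sin_le (by linarith)
  have hs512 : s ≤ 1 / 512 := hsε.trans hεsmall
  have hsd4 : s * (d : ℝ) ^ 4 ≤ 1 / 32 := by nlinarith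
  have hsd2 : s * (d : ℝ) ^ 2 ≤ 1 / 128 := by
    have : 0 ≤ s * (d : ℝ) ^ 2 := by positivity
    nlinarith
  have hin : ∀ v ∈ X, ∀ w ∈ X, v ≠ w → ⟪v, w⟫ ≤ s := by
    intro v hv w hw hvw
    have h := hdist v hv w hw hvw
    have hb := abs_real_inner_le_norm v w
    rw [hXunit v hv, hXunit w hw] at hb
    have hb' := abs_le.1 hb
    rw [← Real.cos_arccos (by linarith [hb'.1] : -1 ≤ ⟪v, w⟫) (by linarith [hb'.2]), hsdef,
      ← Real.cos_pi_div_two_sub]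
    exact Real.cos_le_cos_of_nonneg_of_le_pi (by linarith) (Real.arccos_le_pi _) h
  have hxy : x ≠ y := by
    rintro rfl
    rw [real_inner_self_eq_norm_sq, hXunit x hx] at hopp
    norm_num at hopp
  obtain ⟨Y, hsubY, hYX, hYcard⟩ := Finset.exists_subsuperset_card_eq
    (s := ({x, y} : Finset _)) (t := X) (n := 2 * d)
    (by intro a ha; simp at ha; rcases ha with rfl | rfl <;> assumption)
    (by rw [Finset.card_pair hxy]; omega) hXcard
  have hxY : x ∈ Y := hsubY (by simp)
  have hyY : y ∈ Y := hsubY (by simp)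
  obtain ⟨hF, hG⟩ := gram_bounds Y hYcard s hs0.le (fun v hv => hXunit v (hYX hv))
    (fun v hv w hw => hin v (hYX hv) w (hYX hw))
  have hss : (d : ℝ) ^ 2 * (s + s ^ 2) ≤ 513 / 512 * (s * (d : ℝ) ^ 2) := by
    have : s ^ 2 ≤ 1 / 512 * s := by nlinarith
    nlinarith
  -- entries other than the opposite one are tiny
  have hsmall : ∀ v ∈ Y, ∀ w ∈ Y, v ≠ w → w ∈ Y → -3 / 4 < ⟪v, w⟫ →
      -(3 * (s * (d : ℝ) ^ 2)) ≤ ⟪v, w⟫ := by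
    intro v hv w hw hvw _ h34
    have h := hG v hv w hw hvw
    have hu := hin v (hYX hv) w (hYX hw) hvw
    have hq : -1 / 4 < ⟪v, w⟫ := by nlinarith
    have : 0 ≤ s * (d : ℝ) ^ 2 := by positivity
    by_contra hc
    push Not at hc
    nlinarith
  have hone : ∀ a b c : EuclideanSpace ℝ (Fin d), a ∈ Y → b ∈ Y → c ∈ Y → c ≠ b →
      ⟪a, b⟫ ≤ -3 / 4 → -3 / 4 < ⟪a, c⟫ := by
    intro a b c ha hb hc hcb hab
    by_contra hac
    push Not at hac
    have hbc := hin b (hYX hb) c (hYX hc) hcb.symm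
    have hpos : 0 ≤ ⟪b + c + (3 / 2 : ℝ) • a, b + c + (3 / 2 : ℝ) • a⟫ := real_inner_self_nonneg
    simp only [inner_add_left, inner_add_right, real_inner_smul_left, real_inner_smul_right,
      real_inner_self_eq_norm_sq, hXunit a (hYX ha), hXunit b (hYX hb), hXunit c (hYX hc),
      norm_smul] at hpos
    rw [real_inner_comm b c, real_inner_comm a b, real_inner_comm a c] at hpos
    have h32 : ‖(3 / 2 : ℝ)‖ = 3 / 2 := by norm_num
    rw [h32] at hpos
    linarith
  set e := x + y with he
  have hen : ‖e‖ ^ 2 = 2 + 2 * ⟪x, y⟫ := by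
    rw [he, norm_add_sq_real, hXunit x hx, hXunit y hy]; ring
  have hex : ⟪e, x⟫ = ‖e‖ ^ 2 / 2 := by
    rw [hen, he, inner_add_left, real_inner_self_eq_norm_sq, hXunit x hx, real_inner_comm]; ring
  have hey : ⟪e, y⟫ = ‖e‖ ^ 2 / 2 := by
    rw [hen, he, inner_add_left, real_inner_self_eq_norm_sq, hXunit y hy]; ring
  have hlow := frame_lower_s15 Y e (by linarith)
  have hsplit : ∑ v ∈ Y, ⟪e, v⟫ ^ 2
      = ⟪e, x⟫ ^ 2 + ⟪e, y⟫ ^ 2 + ∑ v ∈ Y \ {x, y}, ⟪e, v⟫ ^ 2 := by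
    rw [← Finset.sum_sdiff hsubY, Finset.sum_pair hxy]; ring
  have hrest : ∑ v ∈ Y \ {x, y}, ⟪e, v⟫ ^ 2
      ≤ (2 * (d : ℝ) - 2) * (6 * (s * (d : ℝ) ^ 2)) ^ 2 := by
    have hc : ((Y \ {x, y}).card : ℝ) = 2 * (d : ℝ) - 2 := by
      rw [Finset.card_sdiff_of_subset hsubY, hYcard, Finset.card_pair hxy,
        Nat.cast_sub (by omega)]
      push_cast; ring
    rw [← hc, ← nsmul_eq_mul]
    refine Finset.sum_le_card_nsmul _ _ _ ?_
    intro z hz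
    simp only [Finset.mem_sdiff, Finset.mem_insert, Finset.mem_singleton, not_or] at hz
    obtain ⟨hzY, hzx, hzy⟩ := hz
    have a1 := hsmall x hxY z hzY (Ne.symm hzx) hzY (hone x y z hxY hyY hzY hzy hopp)
    have a2 := hsmall y hyY z hzY (Ne.symm hzy) hzY
      (hone y x z hyY hxY hzY hzx (by rw [real_inner_comm]; exact hopp))
    have b1 := hin x hx z (hYX hzY) (Ne.symm hzx)
    have b2 := hin y hy z (hYX hzY) (Ne.symm hzy)
    have : s ≤ s * (d : ℝ) ^ 2 := by nlinarith
    rw [he, inner_add_left]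
    apply sq_le_sq'
    · linarith
    · linarith
  have he2 : ‖e‖ ^ 2 ≤ 1 / 2 := by rw [hen]; linarith
  have hE : 3 / 2 * ‖e‖ ^ 2 ≤ (2 * (d : ℝ) - 2) * (6 * (s * (d : ℝ) ^ 2)) ^ 2 := by
    rw [hsplit, hex, hey] at hlow
    have h5 : (‖e‖ ^ 2) * (‖e‖ ^ 2) ≤ 1 / 2 * ‖e‖ ^ 2 :=
      mul_le_mul_of_nonneg_right he2 (sq_nonneg _)
    have h6 : (‖e‖ ^ 2 / 2) ^ 2 = (‖e‖ ^ 2) * (‖e‖ ^ 2) / 4 := by ring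
    rw [h6] at hlow
    linarith
  have hEn : ‖e‖ ≤ 7 * ((d : ℝ) - 1) * (s * (d : ℝ) ^ 2) := by
    have hp : 0 ≤ 7 * ((d : ℝ) - 1) * (s * (d : ℝ) ^ 2) :=
      mul_nonneg (by linarith) (by positivity)
    refine abs_le_of_sq_le_sq' ?_ hp |>.2
    have h1 : ((d : ℝ) - 1) ≤ ((d : ℝ) - 1) ^ 2 := by nlinarith
    have h2 := mul_le_mul_of_nonneg_right h1 (sq_nonneg (s * (d : ℝ) ^ 2))
    have h3 : 0 ≤ ((d : ℝ) - 1) ^ 2 * (s * (d : ℝ) ^ 2) ^ 2 := by positivity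
    have h4 : (7 * ((d : ℝ) - 1) * (s * (d : ℝ) ^ 2)) ^ 2
        = 49 * (((d : ℝ) - 1) ^ 2 * (s * (d : ℝ) ^ 2) ^ 2) := by ring
    have h5 : (2 * (d : ℝ) - 2) * (6 * (s * (d : ℝ) ^ 2)) ^ 2
        = 72 * (((d : ℝ) - 1) * (s * (d : ℝ) ^ 2) ^ 2) := by ring
    rw [h4]
    rw [h5] at hE
    linarith
  -- from chord to angle
  set θ := Real.arccos ⟪y, -x⟫ with hθ
  have hθ0 : 0 ≤ θ := Real.arccos_nonneg _
  have hθπ : θ ≤ Real.pi := Real.arccos_le_pi _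
  have hcos : Real.cos θ = -⟪x, y⟫ := by
    have hb := abs_real_inner_le_norm y (-x)
    rw [norm_neg, hXunit x hx, hXunit y hy] at hb
    have hb' := abs_le.1 hb
    rw [hθ, Real.cos_arccos (by linarith [hb'.1]) (by linarith [hb'.2]), inner_neg_right,
      real_inner_comm]
  have hsin : ‖e‖ = 2 * Real.sin (θ / 2) := by
    have hs' : 0 ≤ Real.sin (θ / 2) :=
      Real.sin_nonneg_of_nonneg_of_le_pi (by linarith) (by linarith)
    have hc2 : Real.cos θ = 1 - 2 * Real.sin (θ / 2) ^ 2 := by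
      have := Real.cos_two_mul (θ / 2)
      rw [show 2 * (θ / 2) = θ by ring] at this
      nlinarith [Real.sin_sq_add_cos_sq (θ / 2)]
    have : ‖e‖ ^ 2 = (2 * Real.sin (θ / 2)) ^ 2 := by rw [hen]; nlinarith
    exact (pow_left_inj₀ (norm_nonneg _) (by positivity) two_ne_zero).1 this
  have hj := Real.mul_le_sin (x := θ / 2) (by linarith) (by linarith)
  have hθe : θ ≤ 2 * ‖e‖ := by
    have h4 : Real.pi ≤ 4 := Real.pi_le_four
    have : 2 / 4 * (θ / 2) ≤ 2 / Real.pi * (θ / 2) := by gcongr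
    linarith
  have hp : 0 ≤ ((d : ℝ) - 1) * (s * (d : ℝ) ^ 2) :=
    mul_nonneg (by linarith) (by positivity)
  have hfin : 32 * (d : ℝ) ^ 2 * ((d : ℝ) - 1) * s
      = 32 * (((d : ℝ) - 1) * (s * (d : ℝ) ^ 2)) := by ring
  rw [hfin]
  linarith
end

section
/- Let d ≥ 3, let φ ∈ (0, π/4], and let ε ∈ (0, sin φ/(16·√(d−1))). Let u_0, …, u_d be unit vectors in ℝ^d such that u_1, …, u_{d−1} span a (d−1)-dimensional linear subspace L of ℝ^d and u_0 and u_d lie strictly on opposite sides of L. Suppose there exist unit vectors v_0, …, v_{d−1} with pairwise spherical distances δ(v_i, v_j) = 2φ and δ(u_i, v_i) ≤ ε for i = 0, …, d−1, and unit vectors w_1, …, w_d with pairwise spherical distances δ(w_i, w_j) = 2φ and δ(u_i, w_i) ≤ ε for i = 1, …, d. Then there exists a unit vector v_d with v_d ≠ v_0 such that v_1, …, v_d have pairwise spherical distances 2φ (i.e. v_1, …, v_{d−1}, v_d are vertices of a regular spherical simplex of edge length 2φ) and δ(u_d, v_d) ≤ (16·√(d−1)/ sin φ)·ε. -/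
open scoped RealInnerProductSpace

lemma aux_gram {ι : Type*} [Fintype ι] {E : Type*} [NormedAddCommGroup E]
    [InnerProductSpace ℝ E] (p : ι → E) (c : ℝ) (hp : ∀ i, ‖p i‖ = 1)
    (hpp : ∀ i j, i ≠ j → ⟪p i, p j⟫ = c) (i : ι) (α : ι → ℝ) :
    ⟪p i, ∑ j, α j • p j⟫ = (1 - c) * α i + c * ∑ j, α j := by
  classical
  have h : ∀ j, ⟪p i, α j • p j⟫ = (if i = j then (1 - c) * α j else 0) + c * α j := by
    intro j
    rw [inner_smul_right]
    split_ifs with hij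
    · subst hij
      rw [real_inner_self_eq_norm_sq, hp]; ring
    · rw [hpp i j hij]; ring
  rw [inner_sum, Finset.sum_congr rfl (fun j _ => h j), Finset.sum_add_distrib, ← Finset.mul_sum]
  simp

set_option maxHeartbeats 2000000 in
lemma aux_main {ι : Type*} [Fintype ι] {E : Type*} [NormedAddCommGroup E]
    [InnerProductSpace ℝ E] [FiniteDimensional ℝ E] (n : ℕ) (hn : Fintype.card ι = n)
    (hE : Module.finrank ℝ E = n + 1) (hn1 : 1 ≤ n)
    (p : ι → E) (p0 m : E) (c σ ε a h : ℝ) (hσ : 0 < σ) (hc : 1 - c = 2 * σ ^ 2) (hc0 : 0 ≤ c)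
    (hp : ∀ i, ‖p i‖ = 1) (hp0 : ‖p0‖ = 1) (hm : ‖m‖ = 1)
    (hpp : ∀ i j, i ≠ j → ⟪p i, p j⟫ = c) (hp0p : ∀ i, ⟪p i, p0⟫ = c)
    (hε : 0 ≤ ε) (hεσ : 256 * n * ε ^ 2 ≤ σ ^ 2)
    (hmp : ∀ i, |⟪p i, m⟫| ≤ ε) (hmp0 : -ε ≤ ⟪p0, m⟫)
    (ha : a = c / (1 + (n - 1) * c)) (hh : h = √(1 - n * a * c)) :
    (∀ i, ⟪p i, p0 - a • ∑ j, p j⟫ = 0) ∧ p0 - a • ∑ j, p j ≠ 0 ∧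
      ‖(p0 - a • ∑ j, p j) - h • m‖ ^ 2 ≤ n * ε ^ 2 / σ ^ 2 := by
  have hn1' : (1 : ℝ) ≤ n := by exact_mod_cast hn1
  have hD : 0 < 1 + ((n : ℝ) - 1) * c := by nlinarith
  have haD : a * (1 + ((n : ℝ) - 1) * c) = c := by rw [ha]; exact div_mul_cancel₀ _ hD.ne'
  have ha0 : 0 ≤ a := by rw [ha]; positivity
  have hc1 : c ≤ 1 := by nlinarith [sq_nonneg σ]
  have han : n * a ≤ 1 := by
    rw [ha, ← mul_div_assoc, div_le_one hD]; nlinarith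
  set q := p0 - a • ∑ j, p j with hq
  have hsum : ∀ i, ⟪p i, ∑ j, p j⟫ = (1 - c) + c * n := by
    intro i
    have := aux_gram p c hp hpp i (fun _ => 1)
    simpa [hn] using this
  have horth : ∀ i, ⟪p i, q⟫ = 0 := by
    intro i
    rw [hq, inner_sub_right, inner_smul_right, hp0p, hsum]
    linarith
  have hqS : ⟪∑ j, p j, q⟫ = 0 := by
    rw [sum_inner]; simp [horth]
  have hqq : ‖q‖ ^ 2 = 1 - n * a * c := by
    rw [← real_inner_self_eq_norm_sq]
    conv_lhs => lhs; rw [hq]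
    rw [inner_sub_left, inner_smul_left, hqS, hq, inner_sub_right, inner_smul_right,
      real_inner_self_eq_norm_sq, hp0, inner_sum]
    have : ∀ j, ⟪p0, p j⟫ = c := fun j => by rw [real_inner_comm]; exact hp0p j
    simp [this, hn]; ring
  have hqσ : 2 * σ ^ 2 ≤ ‖q‖ ^ 2 := by
    rw [hqq]; nlinarith
  have hq1 : ‖q‖ ^ 2 ≤ 1 := by
    rw [hqq]; nlinarith [mul_nonneg (mul_nonneg (by linarith : (0:ℝ) ≤ n) ha0) hc0]
  have hhq : h = ‖q‖ := by
    rw [hh, ← hqq, Real.sqrt_sq (norm_nonneg _)]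
  have hqpos : 0 < ‖q‖ := by
    rcases (norm_nonneg q).eq_or_lt with h0 | h0
    · rw [← h0] at hqσ; nlinarith [pow_pos hσ 2]
    · exact h0
  have hq0 : q ≠ 0 := norm_pos_iff.mp hqpos
  refine ⟨horth, hq0, ?_⟩
  -- quadratic form
  have hquad : ∀ α : ι → ℝ, (1 - c) * ∑ j, α j ^ 2 ≤ ‖∑ j, α j • p j‖ ^ 2 := by
    intro α
    rw [← real_inner_self_eq_norm_sq]
    rw [sum_inner]
    have : ∀ i, ⟪α i • p i, ∑ j, α j • p j⟫ = (1 - c) * α i ^ 2 + (c * ∑ j, α j) * α i := by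
      intro i
      rw [inner_smul_left, aux_gram p c hp hpp]; simp; ring
    rw [Finset.sum_congr rfl (fun i _ => this i), Finset.sum_add_distrib, ← Finset.mul_sum,
      ← Finset.mul_sum]
    nlinarith [mul_nonneg hc0 (sq_nonneg (∑ j, α j))]
  have hli : LinearIndependent ℝ p := by
    rw [Fintype.linearIndependent_iff]
    intro g hg i
    have h1 := hquad g
    rw [hg] at h1
    simp only [norm_zero] at h1
    have h2 : g i ^ 2 ≤ ∑ j, g j ^ 2 :=
      Finset.single_le_sum (f := fun j => g j ^ 2) (fun j _ => sq_nonneg _) (Finset.mem_univ i)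
    have h3 : 0 < 1 - c := by rw [hc]; positivity
    have h4 : g i ^ 2 ≤ 0 := by nlinarith
    exact pow_eq_zero_iff (two_ne_zero) |>.mp (le_antisymm h4 (sq_nonneg _))
  set V := Submodule.span ℝ (Set.range p) with hV
  have hVr : Module.finrank ℝ V = n := by
    rw [hV, finrank_span_eq_card hli, hn]
  have hVo : Module.finrank ℝ Vᗮ = 1 := by
    have := V.finrank_add_finrank_orthogonal
    omega
  have hqV : q ∈ Vᗮ := by
    rw [Submodule.mem_orthogonal]
    intro y hy
    rw [hV, Submodule.mem_span_range_iff_exists_fun] at hy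
    obtain ⟨g, rfl⟩ := hy
    rw [sum_inner]
    simp [inner_smul_left, horth]
  obtain ⟨k, α, hk⟩ : ∃ (k : ℝ) (α : ι → ℝ), m = ∑ j, α j • p j + k • q := by
    obtain ⟨y, hy, z, hz, hyz⟩ := V.exists_add_mem_mem_orthogonal m
    have h1 := (finrank_eq_one_iff_of_nonzero' (⟨q, hqV⟩ : Vᗮ) (by simpa using hq0)).mp hVo ⟨z, hz⟩
    obtain ⟨k, hk⟩ := h1
    rw [hV, Submodule.mem_span_range_iff_exists_fun] at hy
    obtain ⟨g, rfl⟩ := hy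
    refine ⟨k, g, ?_⟩
    have : k • q = z := congrArg Subtype.val hk
    rw [this]; exact hyz
  set x := ∑ j, α j • p j with hx
  have hxq : ⟪x, q⟫ = 0 := by
    rw [hx, sum_inner]; simp [inner_smul_left, horth]
  have hmq : ⟪q, m⟫ = k * ‖q‖ ^ 2 := by
    rw [hk, inner_add_right, real_inner_comm, hxq, inner_smul_right, real_inner_self_eq_norm_sq]
    ring
  have hm2 : 1 = ‖x‖ ^ 2 + k ^ 2 * ‖q‖ ^ 2 := by
    have h1 : ‖m‖ ^ 2 = 1 := by rw [hm]; norm_num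
    rw [← h1, hk, norm_add_sq_real, inner_smul_right, hxq, norm_smul, mul_pow, Real.norm_eq_abs,
      sq_abs]
    ring
  have hxx : ‖x‖ ^ 2 = ∑ j, α j * ⟪p j, m⟫ := by
    rw [← real_inner_self_eq_norm_sq]
    conv_lhs => lhs; rw [hx]
    rw [sum_inner]
    refine Finset.sum_congr rfl fun j _ => ?_
    rw [inner_smul_left, hk, inner_add_right, inner_smul_right, horth]; simp
  have hcs : (‖x‖ ^ 2) ^ 2 ≤ (∑ j, α j ^ 2) * (n * ε ^ 2) := by
    rw [hxx]
    refine (Finset.sum_mul_sq_le_sq_mul_sq _ _ _).trans ?_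
    refine mul_le_mul_of_nonneg_left ?_ (Finset.sum_nonneg fun _ _ => sq_nonneg _)
    calc ∑ i, ⟪p i, m⟫ ^ 2 ≤ ∑ i : ι, ε ^ 2 :=
          Finset.sum_le_sum fun i _ => sq_le_sq' (abs_le.mp (hmp i)).1 (abs_le.mp (hmp i)).2
      _ = n * ε ^ 2 := by simp [hn]
  have hxb : 2 * σ ^ 2 * ‖x‖ ^ 2 ≤ n * ε ^ 2 := by
    have h1 := hquad α
    rw [hc, ← hx] at h1
    rcases (sq_nonneg ‖x‖).eq_or_lt with h0 | h0
    · rw [← h0]; simp; positivity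
    · have h2 : (2 * σ ^ 2 * ‖x‖ ^ 2) * ‖x‖ ^ 2 ≤ (n * ε ^ 2) * ‖x‖ ^ 2 := by
        have h3 : 0 ≤ n * ε ^ 2 := by positivity
        nlinarith [mul_le_mul_of_nonneg_right h1 h3, mul_le_mul_of_nonneg_left hcs (by positivity : 0 ≤ 2 * σ ^ 2)]
      exact le_of_mul_le_mul_right h2 h0
  have hσ2 : 0 < σ ^ 2 := by positivity
  have hx512 : ‖x‖ ^ 2 ≤ 1 / 512 := by
    have : σ ^ 2 * (512 * ‖x‖ ^ 2) ≤ σ ^ 2 * 1 := by nlinarith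
    have := le_of_mul_le_mul_left this hσ2
    linarith
  have hTlow : -(2 * ε) ≤ k * ‖q‖ ^ 2 := by
    rw [← hmq, hq, inner_sub_left, inner_smul_left, sum_inner]
    have h1 : ∑ i, ⟪p i, m⟫ ≤ n * ε := by
      calc ∑ i, ⟪p i, m⟫ ≤ ∑ i : ι, ε := Finset.sum_le_sum fun i _ => (abs_le.mp (hmp i)).2
        _ = n * ε := by simp [hn]
    have h2 := mul_le_mul_of_nonneg_left h1 ha0
    have h3 := mul_le_mul_of_nonneg_right han hε
    simp only [conj_trivial]
    nlinarith
  have hkpos : 0 < k := by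
    by_contra hneg
    push Not at hneg
    have h1 : (k * ‖q‖ ^ 2) ^ 2 ≤ (2 * ε) ^ 2 := by
      apply sq_le_sq' hTlow
      nlinarith [mul_nonneg (neg_nonneg.mpr hneg) (sq_nonneg ‖q‖)]
    have h2 : k ^ 2 * ‖q‖ ^ 2 ≥ 511 / 512 := by linarith
    have h3 : ε ^ 2 * 256 ≤ σ ^ 2 := by nlinarith [sq_nonneg ε]
    have h4 : (k * ‖q‖ ^ 2) ^ 2 = (k ^ 2 * ‖q‖ ^ 2) * ‖q‖ ^ 2 := by ring
    have h5 : 511 / 512 * (2 * σ ^ 2) ≤ (k ^ 2 * ‖q‖ ^ 2) * ‖q‖ ^ 2 :=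
      mul_le_mul h2 hqσ (by positivity) (by positivity)
    nlinarith
  have ht0 : 0 ≤ k * ‖q‖ := by positivity
  have ht : k * ‖q‖ ≤ 1 := by nlinarith [sq_nonneg ‖x‖]
  have hfin : ‖q - h • m‖ ^ 2 = ‖q‖ ^ 2 * (2 - 2 * (k * ‖q‖)) := by
    rw [norm_sub_sq_real, inner_smul_right, hmq, norm_smul, hm, hhq]; simp; ring
  rw [hfin, le_div_iff₀ hσ2]
  have h6 : ‖q‖ ^ 2 * (2 - 2 * (k * ‖q‖)) ≤ 1 * (2 * ‖x‖ ^ 2) := by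
    apply mul_le_mul hq1 _ (by linarith) zero_le_one
    nlinarith
  nlinarith

lemma aux_chord {E : Type*} [NormedAddCommGroup E] [InnerProductSpace ℝ E] (x y : E)
    (hx : ‖x‖ = 1) (hy : ‖y‖ = 1) (ε : ℝ) (hε : 0 ≤ ε) (hε' : ε ≤ 1)
    (h : Real.arccos ⟪x, y⟫ ≤ ε) : ‖x - y‖ ≤ ε := by
  have hb := abs_le.mp (abs_real_inner_le_norm x y)
  rw [hx, hy] at hb
  have h1 : Real.cos ε ≤ ⟪x, y⟫ := by
    have hca : Real.cos (Real.arccos ⟪x, y⟫) = ⟪x, y⟫ :=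
      Real.cos_arccos (by linarith [hb.1]) (by linarith [hb.2])
    rw [← hca]
    exact Real.cos_le_cos_of_nonneg_of_le_pi (Real.arccos_nonneg _)
      (by linarith [Real.pi_gt_three]) h
  have h2 := Real.one_sub_sq_div_two_le_cos (x := ε)
  have h3 := norm_sub_sq_real x y
  rw [hx, hy] at h3
  exact abs_le_of_sq_le_sq' (by nlinarith) hε |>.2

lemma aux_arc {E : Type*} [NormedAddCommGroup E] [InnerProductSpace ℝ E] (x y : E)
    (hx : ‖x‖ = 1) (hy : ‖y‖ = 1) (A : ℝ) (hA : 0 ≤ A) (hA' : A ≤ 1)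
    (h : ‖x - y‖ ≤ A / 2) : Real.arccos ⟪x, y⟫ ≤ A := by
  have hpi : A ≤ Real.pi := by linarith [Real.pi_gt_three]
  have h3 := norm_sub_sq_real x y
  rw [hx, hy] at h3
  have h4 : ‖x - y‖ ^ 2 ≤ (A / 2) ^ 2 := pow_le_pow_left₀ (norm_nonneg _) h 2
  have h5 : Real.cos A ≤ 1 - A ^ 2 / 8 := by
    have h6 := Real.cos_le_one_sub_mul_cos_sq (x := A) (by rw [abs_of_nonneg hA]; exact hpi)
    have h7 : 1 / 8 ≤ 2 / Real.pi ^ 2 := by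
      rw [div_le_div_iff₀ (by norm_num) (by positivity)]
      nlinarith [Real.pi_lt_four, Real.pi_pos]
    nlinarith [mul_le_mul_of_nonneg_right h7 (sq_nonneg A)]
  rw [← Real.arccos_cos hA hpi]
  exact Real.arccos_le_arccos (by nlinarith)

lemma aux_inner_eq {E : Type*} [NormedAddCommGroup E] [InnerProductSpace ℝ E] (x y : E)
    (hx : ‖x‖ = 1) (hy : ‖y‖ = 1) (A : ℝ) (h : Real.arccos ⟪x, y⟫ = A) :
    ⟪x, y⟫ = Real.cos A := by
  have hb := abs_le.mp (abs_real_inner_le_norm x y)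
  rw [hx, hy] at hb
  rw [← h, Real.cos_arccos (by linarith [hb.1]) (by linarith [hb.2])]

set_option maxHeartbeats 2000000 in
/-- Gluing of close-to-regular Delone simplices: let `u_0, …, u_d` be unit vectors in
`ℝ^d` such that `u_1, …, u_{d-1}` span a `(d-1)`-dimensional subspace `L` strictly
separating `u_0` and `u_d`. If `u_0, …, u_{d-1}` are within `ε` of the vertices
`v_0, …, v_{d-1}` of a regular spherical simplex of edge length `2φ`, and
`u_1, …, u_d` are within `ε` of the vertices `w_1, …, w_d` of another one, then there
is a vertex `v_d ≠ v_0` completing `v_1, …, v_{d-1}` to a regular spherical simplex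
of edge length `2φ` with `δ(u_d, v_d) ≤ (16√(d-1)/sin φ)·ε`. -/
theorem close_simplices (d : ℕ) (hd : 3 ≤ d)
    (φ : ℝ) (hφ : φ ∈ Set.Ioc (0 : ℝ) (Real.pi / 4))
    (ε : ℝ) (hε : ε ∈ Set.Ioo (0 : ℝ) (Real.sin φ / (16 * Real.sqrt ((d : ℝ) - 1))))
    (u : Fin (d + 1) → EuclideanSpace ℝ (Fin d))
    (hu : ∀ i, ‖u i‖ = 1)
    (L : Submodule ℝ (EuclideanSpace ℝ (Fin d)))
    (hL : L = Submodule.span ℝ (u '' {i : Fin (d + 1) | 1 ≤ (i : ℕ) ∧ (i : ℕ) ≤ d - 1}))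
    (hLrank : Module.finrank ℝ L = d - 1)
    (hsep : ∃ w : EuclideanSpace ℝ (Fin d), w ∈ Lᗮ ∧ w ≠ 0 ∧
      0 < ⟪w, u 0⟫ ∧ ⟪w, u (Fin.last d)⟫ < 0)
    (v : Fin (d + 1) → EuclideanSpace ℝ (Fin d))
    (hvunit : ∀ i : Fin (d + 1), (i : ℕ) < d → ‖v i‖ = 1)
    (hvreg : ∀ i j : Fin (d + 1), (i : ℕ) < d → (j : ℕ) < d → i ≠ j →
      Real.arccos ⟪v i, v j⟫ = 2 * φ)
    (huv : ∀ i : Fin (d + 1), (i : ℕ) < d → Real.arccos ⟪u i, v i⟫ ≤ ε)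
    (w : Fin (d + 1) → EuclideanSpace ℝ (Fin d))
    (hwunit : ∀ i : Fin (d + 1), 1 ≤ (i : ℕ) → ‖w i‖ = 1)
    (hwreg : ∀ i j : Fin (d + 1), 1 ≤ (i : ℕ) → 1 ≤ (j : ℕ) → i ≠ j →
      Real.arccos ⟪w i, w j⟫ = 2 * φ)
    (huw : ∀ i : Fin (d + 1), 1 ≤ (i : ℕ) → Real.arccos ⟪u i, w i⟫ ≤ ε) :
    ∃ vd : EuclideanSpace ℝ (Fin d), ‖vd‖ = 1 ∧ vd ≠ v 0 ∧
      (∀ i : Fin (d + 1), 1 ≤ (i : ℕ) → (i : ℕ) ≤ d - 1 →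
        Real.arccos ⟪v i, vd⟫ = 2 * φ) ∧
      Real.arccos ⟪u (Fin.last d), vd⟫ ≤ (16 * Real.sqrt ((d : ℝ) - 1) / Real.sin φ) * ε := by
  obtain ⟨n, rfl⟩ : ∃ n, d = n + 1 := ⟨d - 1, by omega⟩
  obtain ⟨hφ0, hφ1⟩ := hφ
  obtain ⟨hε0, hε1⟩ := hε
  have hpi := Real.pi_gt_three
  have hpi4 := Real.pi_lt_four
  have hcast : (((n + 1 : ℕ) : ℝ) - 1) = n := by push_cast; ring
  rw [hcast] at hε1 ⊢
  have hn2 : (2 : ℝ) ≤ n := by exact_mod_cast (by omega : 2 ≤ n)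
  set σ := Real.sin φ with hσdef
  have hσ : 0 < σ := Real.sin_pos_of_pos_of_lt_pi hφ0 (by linarith)
  set c := Real.cos (2 * φ) with hcdef
  have hc : 1 - c = 2 * σ ^ 2 := by
    rw [hcdef, Real.cos_two_mul, hσdef]; nlinarith [Real.sin_sq_add_cos_sq φ]
  have hc0 : 0 ≤ c := Real.cos_nonneg_of_neg_pi_div_two_le_of_le (by linarith) (by linarith)
  set r := √(n : ℝ) with hr
  have hr2 : r ^ 2 = n := Real.sq_sqrt (by linarith)
  have hr0 : 0 < r := Real.sqrt_pos.mpr (by linarith)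
  have hεr : 16 * r * ε < σ := by
    rw [lt_div_iff₀ (by positivity)] at hε1; linarith
  have hσ1 : 2 * σ ^ 2 ≤ 1 := by linarith
  have h2σr : 2 * σ ≤ r := by
    apply abs_le_of_sq_le_sq' _ hr0.le |>.2
    nlinarith
  have hr1 : 1 ≤ r := by nlinarith
  have hε1' : ε ≤ 1 := by nlinarith
  have hεσ : 256 * n * ε ^ 2 ≤ σ ^ 2 := by
    rw [← hr2]
    have := pow_le_pow_left₀ (by positivity) hεr.le 2
    linarith [this, (by ring : (16 * r * ε) ^ 2 = 256 * r ^ 2 * ε ^ 2)]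
  obtain ⟨m0, hm0L, hm00, hm0u, hm0d⟩ := hsep
  have hm0n : 0 < ‖m0‖ := norm_pos_iff.mpr hm00
  set m := ‖m0‖⁻¹ • m0 with hmdef
  have hm : ‖m‖ = 1 := by
    rw [hmdef, norm_smul, norm_inv, norm_norm]; field_simp
  have hmu0 : 0 < ⟪u 0, m⟫ := by
    rw [hmdef, inner_smul_right, real_inner_comm]; positivity
  have hmud : ⟪u (Fin.last (n + 1)), m⟫ < 0 := by
    rw [hmdef, inner_smul_right, real_inner_comm]
    exact mul_neg_of_pos_of_neg (by positivity) hm0d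
  let e : Fin n → Fin (n + 1 + 1) := fun i => i.succ.castSucc
  have he1 : ∀ i, 1 ≤ (e i : ℕ) := fun i => by simp [e]
  have he2 : ∀ i, (e i : ℕ) < n + 1 := fun i => by simp [e]
  have heinj : ∀ i j, i ≠ j → e i ≠ e j := fun i j hij h => hij (by simpa [e] using h)
  have he0 : ∀ i, e i ≠ 0 := fun i h => by
    have := he1 i; rw [h] at this; simp at this
  have hel : ∀ i, e i ≠ Fin.last (n + 1) := fun i h => by
    have := he2 i; rw [h] at this; simp at this
  have hmue : ∀ i, ⟪u (e i), m⟫ = 0 := by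
    intro i
    rw [hmdef, inner_smul_right, (Submodule.mem_orthogonal _ _).mp hm0L, mul_zero]
    rw [hL]
    exact Submodule.subset_span ⟨e i, ⟨he1 i, by have := he2 i; omega⟩, rfl⟩
  have h0lt : ((0 : Fin (n + 1 + 1)) : ℕ) < n + 1 := by simp
  have hlge : 1 ≤ ((Fin.last (n + 1) : Fin (n + 1 + 1)) : ℕ) := by simp
  have huvc : ∀ i : Fin (n + 1 + 1), (i : ℕ) < n + 1 → ‖u i - v i‖ ≤ ε := fun i hi =>
    aux_chord _ _ (hu i) (hvunit i hi) ε hε0.le hε1' (huv i hi)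
  have huwc : ∀ i : Fin (n + 1 + 1), 1 ≤ (i : ℕ) → ‖u i - w i‖ ≤ ε := fun i hi =>
    aux_chord _ _ (hu i) (hwunit i hi) ε hε0.le hε1' (huw i hi)
  have hin : ∀ x y : EuclideanSpace ℝ (Fin (n + 1)), ‖x - y‖ ≤ ε → |⟪x, m⟫ - ⟪y, m⟫| ≤ ε := by
    intro x y hxy
    rw [← inner_sub_left]
    refine (abs_real_inner_le_norm _ _).trans ?_
    rw [hm, mul_one]; exact hxy
  set a := c / (1 + ((n : ℝ) - 1) * c) with ha
  set h := √(1 - n * a * c) with hh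
  have hE : Module.finrank ℝ (EuclideanSpace ℝ (Fin (n + 1))) = n + 1 := by simp
  obtain ⟨hV1, hV2, hV3⟩ := aux_main n (by simp) hE (by omega) (fun i => v (e i)) (v 0) m c σ ε a h
    hσ hc hc0 (fun i => hvunit _ (he2 i)) (hvunit 0 h0lt) hm
    (fun i j hij => aux_inner_eq _ _ (hvunit _ (he2 i)) (hvunit _ (he2 j)) _
      (hvreg _ _ (he2 i) (he2 j) (heinj i j hij)))
    (fun i => aux_inner_eq _ _ (hvunit _ (he2 i)) (hvunit _ h0lt) _
      (hvreg _ _ (he2 i) h0lt (he0 i))) hε0.le hεσ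
    (fun i => by
      have := hin _ _ (huvc _ (he2 i))
      rwa [hmue, zero_sub, abs_neg] at this)
    (by have := abs_le.mp (hin _ _ (huvc _ h0lt)); linarith [this.2]) ha hh
  obtain ⟨hW1, hW2, hW3⟩ := aux_main n (by simp) hE (by omega) (fun i => w (e i))
    (w (Fin.last (n + 1))) (-m) c σ ε a h
    hσ hc hc0 (fun i => hwunit _ (he1 i)) (hwunit _ hlge) (by rw [norm_neg, hm])
    (fun i j hij => aux_inner_eq _ _ (hwunit _ (he1 i)) (hwunit _ (he1 j)) _
      (hwreg _ _ (he1 i) (he1 j) (heinj i j hij)))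
    (fun i => aux_inner_eq _ _ (hwunit _ (he1 i)) (hwunit _ hlge) _
      (hwreg _ _ (he1 i) hlge (hel i))) hε0.le hεσ
    (fun i => by
      have := hin _ _ (huwc _ (he1 i))
      rw [inner_neg_right]
      rwa [hmue, zero_sub] at this)
    (by have := abs_le.mp (hin _ _ (huwc _ hlge)); rw [inner_neg_right]; linarith [this.1]) ha hh
  have hK : ∀ z : EuclideanSpace ℝ (Fin (n + 1)), ‖z‖ ^ 2 ≤ n * ε ^ 2 / σ ^ 2 → ‖z‖ ≤ r * ε / σ := by
    intro z hz
    apply abs_le_of_sq_le_sq' _ (by positivity) |>.2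
    rw [div_pow, mul_pow, hr2]; exact hz
  replace hV3 := hK _ hV3
  replace hW3 := hK _ hW3
  have hn0 : (0 : ℝ) < n := by linarith
  have hD : 0 < 1 + ((n : ℝ) - 1) * c := by nlinarith
  have ha0 : 0 ≤ a := by rw [ha]; positivity
  have han : n * a ≤ 1 := by
    rw [ha, ← mul_div_assoc, div_le_one hD]; nlinarith [sq_nonneg σ]
  set q := v 0 - a • ∑ j, v (e j) with hq
  set q' := w (Fin.last (n + 1)) - a • ∑ j, w (e j) with hq'
  have hqg : ⟪a • ∑ j, v (e j), q⟫ = 0 := by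
    rw [inner_smul_left, sum_inner, Finset.sum_eq_zero (fun i _ => hV1 i), mul_zero]
  have hv0q : v 0 = a • ∑ j, v (e j) + q := by rw [hq]; abel
  have hvd : ‖v 0 - (2 : ℝ) • q‖ = 1 := by
    have h1 : v 0 - (2 : ℝ) • q = a • ∑ j, v (e j) - q := by
      rw [two_smul, hq]; abel
    have h2 : ‖v 0‖ ^ 2 = 1 := by rw [hvunit 0 h0lt]; norm_num
    rw [hv0q, norm_add_sq_real, hqg] at h2
    have h3 : ‖v 0 - (2 : ℝ) • q‖ ^ 2 = 1 := by
      rw [h1, norm_sub_sq_real, hqg]; linarith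
    exact (pow_eq_one_iff_of_nonneg (norm_nonneg _) two_ne_zero).mp h3
  refine ⟨v 0 - (2 : ℝ) • q, hvd, ?_, ?_, ?_⟩
  · intro hcon
    have : (2 : ℝ) • q = 0 := by simpa using hcon
    exact hV2 ((smul_eq_zero_iff_right two_ne_zero).mp this)
  · intro i hi1 hi2
    obtain ⟨j, rfl⟩ : ∃ j, e j = i := by
      refine ⟨⟨(i : ℕ) - 1, by omega⟩, ?_⟩
      apply Fin.ext
      simp [e]; omega
    rw [inner_sub_right, inner_smul_right, hV1 j, mul_zero, sub_zero]
    exact hvreg _ _ (he2 j) h0lt (he0 j)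
  · have hA : 16 * r / σ * ε = 16 * (r * ε / σ) := by ring
    rw [hA]
    set K := r * ε / σ with hKdef
    have hK0 : 0 ≤ K := by positivity
    have hK1 : 16 * K ≤ 1 := by
      rw [hKdef, ← mul_div_assoc, div_le_one hσ]; linarith
    have hK2 : 2 * ε ≤ K := by
      rw [hKdef, le_div_iff₀ hσ]; nlinarith
    apply aux_arc _ _ (hu _) hvd _ (by linarith) hK1
    have hdec : u (Fin.last (n + 1)) - (v 0 - (2 : ℝ) • q) =
        (u (Fin.last (n + 1)) - w (Fin.last (n + 1))) + a • ∑ j, (w (e j) - v (e j))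
          + ((q' - h • (-m)) + (q - h • m)) := by
      rw [Finset.sum_sub_distrib, hq, hq']; module
    have hs : ‖a • ∑ j, (w (e j) - v (e j))‖ ≤ 2 * ε := by
      rw [norm_smul, Real.norm_eq_abs, abs_of_nonneg ha0]
      have h1 : ‖∑ j, (w (e j) - v (e j))‖ ≤ n * (2 * ε) := by
        refine (norm_sum_le _ _).trans ?_
        calc ∑ i, ‖w (e i) - v (e i)‖ ≤ ∑ i : Fin n, 2 * ε := by
              refine Finset.sum_le_sum fun i _ => ?_
              have h1 := huwc _ (he1 i)
              have h2 := huvc _ (he2 i)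
              rw [norm_sub_rev] at h1
              have h3 := norm_sub_le_norm_sub_add_norm_sub (w (e i)) (u (e i)) (v (e i))
              linarith
          _ = n * (2 * ε) := by simp
      have h2 := mul_le_mul_of_nonneg_left h1 ha0
      have h3 := mul_le_mul_of_nonneg_right han (by linarith : 0 ≤ 2 * ε)
      linarith
    rw [hdec]
    have h1 := norm_add_le ((u (Fin.last (n + 1)) - w (Fin.last (n + 1))) + a • ∑ j, (w (e j) - v (e j))) ((q' - h • (-m)) + (q - h • m))
    have h2 := norm_add_le (u (Fin.last (n + 1)) - w (Fin.last (n + 1))) (a • ∑ j, (w (e j) - v (e j)))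
    have h3 := norm_add_le (q' - h • (-m)) (q - h • m)
    have h4 := huwc _ hlge
    linarith
end

section
/- Let a > 0 and let T ⊂ ℝ² be a triangle (the convex hull of three affinely independent points) such that every side of T has Euclidean length at least a and the circumcenter of T (the center of the circle passing through the three vertices) lies in T. Then the area of T is at least (√3/4)·a². -/
open MeasureTheory in
lemma tri_vol (p : Fin 3 → EuclideanSpace ℝ (Fin 2)) :
    ENNReal.ofReal |(p 1 0 - p 0 0) * (p 2 1 - p 0 1) - (p 1 1 - p 0 1) * (p 2 0 - p 0 0)|
      ≤ 2 * volume (convexHull ℝ (Set.range p)) := by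
  set T := convexHull ℝ (Set.range p) with hT
  let b := EuclideanSpace.basisFun (Fin 2) ℝ
  let v : Fin 2 → EuclideanSpace ℝ (Fin 2) := ![p 1 - p 0, p 2 - p 0]
  have h1 : volume (parallelepiped v) = ENNReal.ofReal
      |(p 1 0 - p 0 0) * (p 2 1 - p 0 1) - (p 1 1 - p 0 1) * (p 2 0 - p 0 0)| := by
    have h := Measure.addHaar_parallelepiped b.toBasis v
    rw [OrthonormalBasis.addHaar_eq_volume] at h
    rw [h, Module.Basis.det_apply, Matrix.det_fin_two]
    simp [Module.Basis.toMatrix_apply, b, v]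
    congr 2
    ring
  have hp : ∀ i, p i ∈ T := fun i => subset_convexHull ℝ _ ⟨i, rfl⟩
  have hcv : Convex ℝ T := convex_convexHull ℝ _
  have comb : ∀ s t : ℝ, 0 ≤ s → 0 ≤ t → s + t ≤ 1 →
      p 0 + (s • (p 1 - p 0) + t • (p 2 - p 0)) ∈ T := by
    intro s t hs ht hst
    have := hcv.sum_mem (t := Finset.univ) (w := ![1 - s - t, s, t]) (z := p)
      (by intro i _; fin_cases i <;> simp <;> linarith)
      (by simp [Fin.sum_univ_three]; ring) (fun i _ => hp i)
    convert this using 1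
    simp [Fin.sum_univ_three]
    module
  have hsub : parallelepiped v ⊆ ((fun x => p 0 + x) ⁻¹' T) ∪
      ((fun x => (p 1 + p 2 - p 0) - x) ⁻¹' T) := by
    intro x hx
    rw [mem_parallelepiped_iff] at hx
    obtain ⟨t, ht, rfl⟩ := hx
    have h00 := ht.1 0
    have h01 := ht.1 1
    have h10 := ht.2 0
    have h11 := ht.2 1
    simp only [Pi.zero_apply, Pi.one_apply] at h00 h01 h10 h11
    rcases le_total (t 0 + t 1) 1 with h | h
    · left
      have := comb (t 0) (t 1) h00 h01 h
      simpa [Fin.sum_univ_two, v] using this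
    · right
      have := comb (1 - t 0) (1 - t 1) (by linarith) (by linarith) (by linarith)
      simp only [Set.mem_preimage, Fin.sum_univ_two, v]
      convert this using 1
      simp
      module
  rw [← h1, two_mul]
  refine (measure_mono hsub).trans ((measure_union_le _ _).trans ?_)
  rw [measure_preimage_add]
  refine add_le_add le_rfl ?_
  have hm : MeasurePreserving (fun x => (p 1 + p 2 - p 0) - x)
      (volume : Measure (EuclideanSpace ℝ (Fin 2))) volume :=
    Measure.measurePreserving_sub_left volume _
  exact hm.measure_preimage_le _

lemma tri_alg {s x y z : ℝ} (hs : 0 ≤ s) (hx : 0 ≤ x) (hy : 0 ≤ y) (hz : 0 ≤ z)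
    (h1 : s ≤ x + y) (h2 : s ≤ x + z) (h3 : s ≤ y + z) :
    3 / 4 * s ^ 2 ≤ x * y + y * z + z * x := by
  have key : ∀ x y z : ℝ, 0 ≤ x → x ≤ s / 2 → s ≤ x + y → s ≤ x + z →
      3 / 4 * s ^ 2 ≤ x * y + y * z + z * x := by
    intro x y z hx hxs h1 h2
    nlinarith [mul_nonneg (by linarith : 0 ≤ y - (s - x)) (by linarith : 0 ≤ z - (s - x)),
      mul_nonneg (by linarith : 0 ≤ y - (s - x)) hs,
      mul_nonneg (by linarith : 0 ≤ z - (s - x)) hs,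
      mul_nonneg (by linarith : 0 ≤ s / 2 - x) (by linarith : 0 ≤ s / 2 + x)]
  rcases le_total x (s / 2) with hx' | hx'
  · exact key x y z hx hx' h1 h2
  rcases le_total y (s / 2) with hy' | hy'
  · linarith [key y z x hy hy' h3 (by linarith)]
  rcases le_total z (s / 2) with hz' | hz'
  · linarith [key z x y hz hz' (by linarith) (by linarith)]
  nlinarith [mul_nonneg (sub_nonneg.2 hx') (sub_nonneg.2 hy'),
    mul_nonneg (sub_nonneg.2 hy') (sub_nonneg.2 hz'),
    mul_nonneg (sub_nonneg.2 hx') (sub_nonneg.2 hz')]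

lemma tri_gram {s A B g α β γ : ℝ} (hs : 0 < s) (hA : s ≤ A) (hB : s ≤ B)
    (hC : s ≤ A + B - 2 * g) (hG : 0 ≤ A * B - g ^ 2)
    (hα : 0 ≤ α) (hβ : 0 ≤ β) (hγ : 0 ≤ γ) (hsum : α + β + γ = 1)
    (e1 : 2 * (β * A + γ * g) = A) (e2 : 2 * (β * g + γ * B) = B) :
    3 / 4 * s ^ 2 ≤ A * B - g ^ 2 := by
  have k1 : 2 * β * (A * B - g ^ 2) = B * (A - g) := by linear_combination B * e1 - g * e2
  have k2 : 2 * γ * (A * B - g ^ 2) = A * (B - g) := by linear_combination A * e2 - g * e1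
  have k0 : 2 * α * (A * B - g ^ 2) = g * (A + B - 2 * g) := by
    have : α = 1 - β - γ := by linarith
    subst this
    linear_combination -k1 - k2
  have hA0 : 0 < A := by linarith
  have hB0 : 0 < B := by linarith
  have y0 : 0 ≤ A - g := by
    have : 0 ≤ B * (A - g) := by rw [← k1]; positivity
    exact nonneg_of_mul_nonneg_right this hB0
  have z0 : 0 ≤ B - g := by
    have : 0 ≤ A * (B - g) := by rw [← k2]; positivity
    exact nonneg_of_mul_nonneg_right this hA0
  have x0 : 0 ≤ g := by
    have : 0 ≤ g * (A + B - 2 * g) := by rw [← k0]; positivity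
    exact nonneg_of_mul_nonneg_left this (by linarith)
  have := tri_alg hs.le x0 y0 z0 (by linarith) (by linarith) (by linarith)
  linarith


/-- A triangle in `ℝ²` whose sides all have length at least `a` and which contains its
circumcenter has area at least `(√3/4)·a²`. -/
theorem triangle_area_bound (a : ℝ) (ha : 0 < a)
    (p : Fin 3 → EuclideanSpace ℝ (Fin 2))
    (hind : AffineIndependent ℝ p)
    (hside : ∀ i j : Fin 3, i ≠ j → a ≤ dist (p i) (p j))
    (c : EuclideanSpace ℝ (Fin 2))
    (hc1 : dist c (p 0) = dist c (p 1))
    (hc2 : dist c (p 1) = dist c (p 2))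
    (hcT : c ∈ convexHull ℝ (Set.range p)) :
    ENNReal.ofReal (Real.sqrt 3 / 4 * a ^ 2) ≤
      MeasureTheory.volume (convexHull ℝ (Set.range p)) := by

  have hd : ∀ x y : EuclideanSpace ℝ (Fin 2),
      dist x y ^ 2 = (x 0 - y 0) ^ 2 + (x 1 - y 1) ^ 2 := by
    intro x y
    rw [EuclideanSpace.dist_sq_eq]
    simp [Fin.sum_univ_two, Real.dist_eq, sq_abs]
  have hs : ∀ i j : Fin 3, i ≠ j → a ^ 2 ≤ (p i 0 - p j 0) ^ 2 + (p i 1 - p j 1) ^ 2 := by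
    intro i j hij
    rw [← hd]
    exact pow_le_pow_left₀ ha.le (hside i j hij) 2
  have s10 := hs 1 0 (by decide)
  have s20 := hs 2 0 (by decide)
  have s12 := hs 1 2 (by decide)
  have e1 := congrArg (· ^ 2) hc1
  have e2 := congrArg (· ^ 2) (hc1.trans hc2)
  simp only [hd] at e1 e2
  obtain ⟨w, hw0, hw1, hw⟩ : ∃ w : Fin 3 → ℝ, (∀ i, 0 ≤ w i) ∧ ∑ i, w i = 1 ∧
      ∑ i, w i • p i = c := by
    have hset : c ∈ {x | ∃ w : Fin 3 → ℝ, (∀ i, 0 ≤ w i) ∧ ∑ i, w i = 1 ∧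
        ∑ i, w i • p i = x} := by
      refine convexHull_min ?_ ?_ hcT
      · rintro _ ⟨i, rfl⟩
        refine ⟨Pi.single i 1, ?_, ?_, ?_⟩
        · intro j
          by_cases h : j = i
          · subst h; simp
          · simp [h]
        · simp
        · simp [Pi.single_apply]
      · rintro _ ⟨w, hw0, hw1, rfl⟩ _ ⟨u, hu0, hu1, rfl⟩ s t hs0 ht0 hst
        refine ⟨fun i => s * w i + t * u i, ?_, ?_, ?_⟩
        · intro i
          have := hw0 i
          have := hu0 i
          positivity
        · rw [Finset.sum_add_distrib, ← Finset.mul_sum, ← Finset.mul_sum, hw1, hu1]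
          linarith
        · simp only [Fin.sum_univ_three]
          module
    exact hset
  rw [Fin.sum_univ_three] at hw1 hw
  have c0 : c 0 = w 0 * p 0 0 + w 1 * p 1 0 + w 2 * p 2 0 := by rw [← hw]; simp
  have c1 : c 1 = w 0 * p 0 1 + w 1 * p 1 1 + w 2 * p 2 1 := by rw [← hw]; simp
  have hv := tri_vol p
  clear hs hd hw
  set D := (p 1 0 - p 0 0) * (p 2 1 - p 0 1) - (p 1 1 - p 0 1) * (p 2 0 - p 0 0) with hD
  have hw0' : w 0 = 1 - w 1 - w 2 := by linarith
  have hDD : D ^ 2 = ((p 1 0 - p 0 0) ^ 2 + (p 1 1 - p 0 1) ^ 2) *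
      ((p 2 0 - p 0 0) ^ 2 + (p 2 1 - p 0 1) ^ 2) -
      ((p 1 0 - p 0 0) * (p 2 0 - p 0 0) + (p 1 1 - p 0 1) * (p 2 1 - p 0 1)) ^ 2 := by
    rw [hD]; ring
  rw [hw0'] at c0 c1
  rw [c0, c1] at e1 e2
  have key := tri_gram (s := a ^ 2) (by positivity) s10 s20
    (g := (p 1 0 - p 0 0) * (p 2 0 - p 0 0) + (p 1 1 - p 0 1) * (p 2 1 - p 0 1))
    (by linarith) (by rw [← hDD]; positivity) (hw0 0) (hw0 1) (hw0 2) hw1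
    (by linear_combination e1) (by linear_combination e2)
  rw [← hDD] at key
  have hDa : Real.sqrt 3 / 2 * a ^ 2 ≤ |D| := by
    apply abs_le_of_sq_le_sq' _ (abs_nonneg D) |>.2
    rw [sq_abs, mul_pow, div_pow, Real.sq_sqrt (by norm_num)]
    linarith
  have h2 : ENNReal.ofReal (2 * (Real.sqrt 3 / 4 * a ^ 2)) ≤
      2 * MeasureTheory.volume (convexHull ℝ (Set.range p)) :=
    (ENNReal.ofReal_le_ofReal (by linarith)).trans hv
  rw [ENNReal.ofReal_mul (by norm_num), ENNReal.ofReal_ofNat] at h2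
  exact (ENNReal.mul_le_mul_iff_right (by norm_num) (by norm_num)).1 h2
end

section
/- Let x, y, v be unit vectors in ℝ³, let 0 < ψ < R < π/2, and suppose the spherical distances satisfy δ(x, y) ≥ 2ψ and δ(x, v) = δ(y, v) = R. Let x̄ = x − ⟨x,v⟩·v and ȳ = y − ⟨y,v⟩·v be the components of x and y orthogonal to v, and let ω be the angle between x̄ and ȳ (so cos ω = ⟨x̄, ȳ⟩/(‖x̄‖·‖ȳ‖)). Then: (i) cos ω ≤ 1 − 2·sin²ψ/sin²R; (ii) if moreover ψ = φ − ε and R ≤ r + γ·ε where ψ < φ < r < π/2 − γ·ε and γ > 1 and ε > 0, then cos ω ≤ 1 − 2·sin²φ/sin²r + 4·γ·ε/sin²r. -/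
open scoped RealInnerProductSpace

theorem sin_sq_sub_le_aux (a b : ℝ) (h : a ≤ b) :
    Real.sin b ^ 2 - Real.sin a ^ 2 ≤ b - a := by
  have e : Real.sin b ^ 2 - Real.sin a ^ 2 = Real.sin (b - a) * Real.sin (b + a) := by
    rw [Real.sin_sub, Real.sin_add]
    have h1 := Real.sin_sq_add_cos_sq a
    have h2 := Real.sin_sq_add_cos_sq b
    linear_combination Real.sin a ^ 2 * h2 - Real.sin b ^ 2 * h1
  rw [e]
  calc Real.sin (b - a) * Real.sin (b + a) ≤ |Real.sin (b - a) * Real.sin (b + a)| := le_abs_self _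
    _ = |Real.sin (b - a)| * |Real.sin (b + a)| := abs_mul _ _
    _ ≤ |Real.sin (b - a)| * 1 := by
        gcongr
        exact Real.abs_sin_le_one _
    _ ≤ |b - a| := by rw [mul_one]; exact Real.abs_sin_le_abs
    _ = b - a := abs_of_nonneg (by linarith)

theorem norm_proj_aux (x v : EuclideanSpace ℝ (Fin 3)) (hx : ‖x‖ = 1) (hv : ‖v‖ = 1)
    (R : ℝ) (h0 : 0 ≤ Real.sin R) (h : ⟪x, v⟫ = Real.cos R) :
    ‖x - ⟪x, v⟫ • v‖ = Real.sin R := by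
  have : ‖x - ⟪x, v⟫ • v‖ ^ 2 = Real.sin R ^ 2 := by
    rw [norm_sub_sq_real, norm_smul, inner_smul_right, hx, hv, h, Real.norm_eq_abs, mul_one,
      sq_abs]
    linarith [Real.sin_sq_add_cos_sq R]
  exact (sq_eq_sq₀ (norm_nonneg _) h0).1 this

/-- Angle at the circumcenter: if unit vectors `x, y, v ∈ ℝ³` satisfy `δ(x,y) ≥ 2ψ` and
`δ(x,v) = δ(y,v) = R` with `0 < ψ < R < π/2`, and `ω` is the angle at `v` between the
arcs to `x` and to `y`, then (i) `cos ω ≤ 1 - 2 sin²ψ/sin²R`, and (ii) if `ψ = φ - ε`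
and `R ≤ r + γε` with `ψ < φ < r < π/2 - γε`, `γ > 1`, `ε > 0`, then
`cos ω ≤ 1 - 2 sin²φ/sin²r + 4γε/sin²r`. -/
theorem circumcenter_angle (x y v : EuclideanSpace ℝ (Fin 3))
    (hx : ‖x‖ = 1) (hy : ‖y‖ = 1) (hv : ‖v‖ = 1)
    (ψ R : ℝ) (hψ0 : 0 < ψ) (hψR : ψ < R) (hR : R < Real.pi / 2)
    (hxy : 2 * ψ ≤ Real.arccos ⟪x, y⟫)
    (hxv : Real.arccos ⟪x, v⟫ = R)
    (hyv : Real.arccos ⟪y, v⟫ = R)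
    (cosω : ℝ)
    (hcosω : cosω = ⟪x - ⟪x, v⟫ • v, y - ⟪y, v⟫ • v⟫ /
      (‖x - ⟪x, v⟫ • v‖ * ‖y - ⟪y, v⟫ • v‖)) :
    cosω ≤ 1 - 2 * Real.sin ψ ^ 2 / Real.sin R ^ 2 ∧
    (∀ φ r γ ε : ℝ, 0 < ε → 1 < γ → ψ = φ - ε → R ≤ r + γ * ε →
      ψ < φ → φ < r → r < Real.pi / 2 - γ * ε →
      cosω ≤ 1 - 2 * Real.sin φ ^ 2 / Real.sin r ^ 2 + 4 * γ * ε / Real.sin r ^ 2) := by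
  have hRpos : 0 < R := hψ0.trans hψR
  have hpi := Real.pi_pos
  have hsR : 0 < Real.sin R := Real.sin_pos_of_pos_of_lt_pi hRpos (by linarith)
  have cosarc : ∀ a b : EuclideanSpace ℝ (Fin 3), ‖a‖ = 1 → ‖b‖ = 1 →
      Real.cos (Real.arccos ⟪a, b⟫) = ⟪a, b⟫ := by
    intro a b ha hb
    have := abs_le.1 (abs_real_inner_le_norm a b)
    rw [ha, hb, mul_one] at this
    exact Real.cos_arccos this.1 this.2
  have h1 : ⟪x, v⟫ = Real.cos R := by rw [← cosarc x v hx hv, hxv]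
  have h2 : ⟪y, v⟫ = Real.cos R := by rw [← cosarc y v hy hv, hyv]
  have h3 : ⟪x, y⟫ ≤ Real.cos (2 * ψ) := by
    rw [← cosarc x y hx hy]
    exact Real.cos_le_cos_of_nonneg_of_le_pi (by linarith) (Real.arccos_le_pi _) hxy
  have hin : ⟪x - ⟪x, v⟫ • v, y - ⟪y, v⟫ • v⟫ = ⟪x, y⟫ - Real.cos R ^ 2 := by
    rw [h1, h2]
    simp only [inner_sub_left, inner_sub_right, real_inner_smul_left, real_inner_smul_right]
    rw [real_inner_comm y v, h1, h2, real_inner_self_eq_norm_sq, hv]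
    ring
  have hi : cosω ≤ 1 - 2 * Real.sin ψ ^ 2 / Real.sin R ^ 2 := by
    rw [hcosω, hin, norm_proj_aux x v hx hv R hsR.le h1, norm_proj_aux y v hy hv R hsR.le h2,
      div_le_iff₀ (by positivity)]
    have : (1 - 2 * Real.sin ψ ^ 2 / Real.sin R ^ 2) * (Real.sin R * Real.sin R)
        = Real.sin R ^ 2 - 2 * Real.sin ψ ^ 2 := by field_simp
    rw [this]
    rw [Real.cos_two_mul] at h3
    linarith [Real.sin_sq_add_cos_sq R, Real.sin_sq_add_cos_sq ψ]
  refine ⟨hi, ?_⟩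
  intro φ r γ ε hε hγ hψ hRr hψφ hφr hr
  have hg : ε ≤ γ * ε := by nlinarith
  have hr0 : 0 < r := by linarith
  have hsr : 0 < Real.sin r := Real.sin_pos_of_pos_of_lt_pi hr0 (by linarith)
  have hsφ : 0 < Real.sin φ := Real.sin_pos_of_pos_of_lt_pi (by linarith) (by linarith)
  have k1 : Real.sin φ ^ 2 ≤ Real.sin r ^ 2 := by
    have := Real.sin_le_sin_of_le_of_le_pi_div_two (x := φ) (y := r)
      (by linarith) (by linarith) hφr.le
    gcongr
  have k2 : Real.sin R ^ 2 ≤ Real.sin r ^ 2 + γ * ε := by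
    have := Real.sin_le_sin_of_le_of_le_pi_div_two (x := R) (y := r + γ * ε)
      (by linarith) (by linarith) hRr
    have h5 : Real.sin R ^ 2 ≤ Real.sin (r + γ * ε) ^ 2 := by gcongr
    linarith [sin_sq_sub_le_aux r (r + γ * ε) (by linarith)]
  have k3 : Real.sin φ ^ 2 - ε ≤ Real.sin ψ ^ 2 := by
    linarith [sin_sq_sub_le_aux ψ φ hψφ.le]
  have hS : 0 < Real.sin r ^ 2 := by positivity
  have hA : 0 < Real.sin R ^ 2 := by positivity
  have key : (Real.sin φ ^ 2 - 2 * (γ * ε)) / Real.sin r ^ 2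
      ≤ Real.sin ψ ^ 2 / Real.sin R ^ 2 := by
    rcases le_total (Real.sin φ ^ 2 - 2 * (γ * ε)) 0 with h | h
    · exact (div_nonpos_of_nonpos_of_nonneg h hS.le).trans (by positivity)
    · rw [div_le_div_iff₀ hS hA]
      generalize γ * ε = g at *
      generalize Real.sin φ ^ 2 = F at *
      generalize Real.sin r ^ 2 = S at *
      have a1 := mul_le_mul_of_nonneg_left k2 h
      have a2 := mul_le_mul_of_nonneg_right k3 hS.le
      have a3 := mul_le_mul_of_nonneg_right hg hS.le
      have hg0 : 0 ≤ g := by linarith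
      have a4 := mul_le_mul_of_nonneg_right k1 hg0
      nlinarith [sq_nonneg g]
  have e : 1 - 2 * Real.sin φ ^ 2 / Real.sin r ^ 2 + 4 * γ * ε / Real.sin r ^ 2
      = 1 - 2 * ((Real.sin φ ^ 2 - 2 * (γ * ε)) / Real.sin r ^ 2) := by ring
  rw [e]
  have e2 : 2 * Real.sin ψ ^ 2 / Real.sin R ^ 2 = 2 * (Real.sin ψ ^ 2 / Real.sin R ^ 2) := by ring
  rw [e2] at hi
  linarith
end

section
/- Let θ ∈ (0, 1/3) and let u_1, u_2, u_3, u_4 be unit vectors in ℝ³ satisfying ⟨u_i, u_j⟩ ≤ −θ for all i ≠ j. Then the 3-dimensional volume of the convex hull [u_1, u_2, u_3, u_4] is at least √θ/4. -/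
open scoped RealInnerProductSpace

abbrev E3 := EuclideanSpace ℝ (Fin 3)

lemma inner_sum_sum (u : Fin 4 → E3) (a b : Fin 4 → ℝ) :
    ⟪∑ i, a i • u i, ∑ j, b j • u j⟫ = ∑ i, ∑ j, a i * b j * ⟪u i, u j⟫ := by
  simp only [sum_inner, inner_sum, real_inner_smul_left, real_inner_smul_right]
  rw [Finset.sum_comm]
  refine Finset.sum_congr rfl fun i _ => Finset.sum_congr rfl fun j _ => ?_
  ring

lemma rel_pos (θ : ℝ) (hθ : 0 < θ) (u : Fin 4 → E3)
    (hinner : ∀ i j : Fin 4, i ≠ j → ⟪u i, u j⟫ ≤ -θ)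
    (c : Fin 4 → ℝ) (hc : ∑ i, c i • u i = 0) (h0 : ∀ i, 0 ≤ c i) (hne : c ≠ 0) :
    ∀ i, 0 < c i := by
  intro i
  by_contra hi
  have hi : c i = 0 := le_antisymm (not_lt.mp hi) (h0 i)
  obtain ⟨k, hk⟩ := Function.ne_iff.mp hne
  have hk : 0 < c k := lt_of_le_of_ne (h0 k) (Ne.symm hk)
  have h1 : ⟪u i, ∑ j, c j • u j⟫ = 0 := by rw [hc, inner_zero_right]
  simp only [inner_sum, inner_smul_right] at h1
  have h2 : ∀ j ∈ Finset.univ, c j * ⟪u i, u j⟫ ≤ 0 := by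
    intro j _
    by_cases hij : i = j
    · subst hij; simp [hi]
    · have := hinner i j hij
      nlinarith [h0 j]
  have h3 := (Finset.sum_eq_zero_iff_of_nonpos h2).mp h1 k (Finset.mem_univ _)
  have hik : i ≠ k := by rintro rfl; linarith
  have := hinner i k hik
  nlinarith

lemma rel_sign (θ : ℝ) (hθ : 0 < θ) (u : Fin 4 → E3)
    (hinner : ∀ i j : Fin 4, i ≠ j → ⟪u i, u j⟫ ≤ -θ)
    (c : Fin 4 → ℝ) (hc : ∑ i, c i • u i = 0) (hne : c ≠ 0) :
    (∀ i, 0 < c i) ∨ (∀ i, 0 < - c i) := by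
  have hz : ∑ i, max (c i) 0 • u i = ∑ i, max (-c i) 0 • u i := by
    rw [← sub_eq_zero, ← Finset.sum_sub_distrib, ← hc]
    refine Finset.sum_congr rfl fun i _ => ?_
    rw [← sub_smul]
    congr 1
    rcases le_total (c i) 0 with h | h
    · rw [max_eq_right h, max_eq_left (by linarith)]; ring
    · rw [max_eq_left h, max_eq_right (by linarith)]; ring
  have h1 : 0 ≤ ⟪∑ i, max (c i) 0 • u i, ∑ i, max (-c i) 0 • u i⟫ := by
    rw [← hz]; exact real_inner_self_nonneg
  rw [inner_sum_sum] at h1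
  by_cases hp : ∀ i, 0 ≤ c i
  · exact Or.inl (rel_pos θ hθ u hinner c hc hp hne)
  by_cases hn : ∀ i, 0 ≤ - c i
  · refine Or.inr (rel_pos θ hθ u hinner (fun i => - c i) (by simp [hc]) hn ?_)
    intro h; apply hne; ext i; have := congrFun h i; simpa using this
  exfalso
  push Not at hp hn
  obtain ⟨i, hi⟩ := hp
  obtain ⟨j, hj⟩ := hn
  have hji : j ≠ i := by rintro rfl; linarith
  have key : ∀ a b, max (c a) 0 * max (-c b) 0 * ⟪u a, u b⟫ ≤ 0 := by
    intro a b
    by_cases hab : a = b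
    · subst hab
      rcases le_total (c a) 0 with h | h
      · rw [max_eq_right h]; simp
      · rw [max_eq_right (a := - c a) (by linarith)]; simp
    · have := hinner a b hab
      exact mul_nonpos_of_nonneg_of_nonpos (by positivity) (by linarith)
  have h4 : ∑ a, ∑ b, max (c a) 0 * max (-c b) 0 * ⟪u a, u b⟫ < 0 := by
    refine Finset.sum_neg' (fun a _ => Finset.sum_nonpos fun b _ => key a b) ⟨j, Finset.mem_univ _, ?_⟩
    refine Finset.sum_neg' (fun b _ => key j b) ⟨i, Finset.mem_univ _, ?_⟩
    have := hinner j i hji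
    rw [max_eq_left (by linarith), max_eq_left (by linarith)]
    exact mul_neg_of_pos_of_neg (mul_pos (by linarith) (by linarith)) (by linarith)
  linarith

lemma row_zero (u : Fin 4 → E3) (l : Fin 4 → ℝ) (hl : ∑ i, l i • u i = 0) (i : Fin 4) :
    ∑ j, l j * ⟪u i, u j⟫ = 0 := by
  have h1 : ⟪u i, ∑ j, l j • u j⟫ = 0 := by rw [hl, inner_zero_right]
  simpa only [inner_sum, inner_smul_right] using h1

lemma dirichlet_aux (u : Fin 4 → E3) (l f : Fin 4 → ℝ) (hl : ∑ i, l i • u i = 0) (s : ℝ) :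
    ∑ i, ∑ j, l i * l j * ⟪u i, u j⟫ * (s * (2 * (f i * f j))) =
    ∑ i, ∑ j, l i * l j * ⟪u i, u j⟫ * (f i ^ 2 + f j ^ 2 + s * (2 * (f i * f j))) := by
  have e1 : ∑ i, ∑ j, l i * l j * ⟪u i, u j⟫ * f i ^ 2 = 0 := by
    refine Finset.sum_eq_zero fun i _ => ?_
    have := row_zero u l hl i
    calc _ = l i * f i ^ 2 * ∑ j, l j * ⟪u i, u j⟫ := by
            rw [Finset.mul_sum]; exact Finset.sum_congr rfl fun j _ => by ring
      _ = 0 := by rw [this]; simp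
  have e2 : ∑ i, ∑ j, l i * l j * ⟪u i, u j⟫ * f j ^ 2 = 0 := by
    rw [Finset.sum_comm, ← e1]
    refine Finset.sum_congr rfl fun i _ => Finset.sum_congr rfl fun j _ => ?_
    rw [real_inner_comm]; ring
  simp only [mul_add, Finset.sum_add_distrib, e1, e2]
  ring

lemma upper (θ : ℝ) (hθ : 0 < θ) (u : Fin 4 → E3) (hu : ∀ i, ‖u i‖ = 1)
    (hinner : ∀ i j : Fin 4, i ≠ j → ⟪u i, u j⟫ ≤ -θ)
    (l y : Fin 4 → ℝ) (hl : ∑ i, l i • u i = 0) (hp : ∀ i, 0 < l i) :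
    ‖∑ i, y i • u i‖ ^ 2 ≤ 2 * ∑ i, y i ^ 2 := by
  have hf : y = fun i => l i * (y i / l i) := by
    ext i; have := (hp i).ne'; field_simp
  obtain ⟨f, rfl⟩ : ∃ f : Fin 4 → ℝ, y = fun i => l i * f i :=
    ⟨fun i => y i / l i, by ext i; have := (hp i).ne'; field_simp⟩
  rw [← real_inner_self_eq_norm_sq, inner_sum_sum]
  have h := dirichlet_aux u l f hl 1
  have h2 : ∑ i, ∑ j, l i * l j * ⟪u i, u j⟫ * (f i ^ 2 + f j ^ 2 + 1 * (2 * (f i * f j)))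
      ≤ ∑ i, ∑ j, if i = j then 4 * (l i * f i) ^ 2 else 0 := by
    refine Finset.sum_le_sum fun i _ => Finset.sum_le_sum fun j _ => ?_
    split_ifs with hij
    · subst hij; rw [real_inner_self_eq_norm_sq, hu]; apply le_of_eq; ring
    · have := hinner i j hij
      have e : 0 ≤ f i ^ 2 + f j ^ 2 + 1 * (2 * (f i * f j)) := by nlinarith [sq_nonneg (f i + f j)]
      have := mul_pos (hp i) (hp j)
      exact mul_nonpos_of_nonpos_of_nonneg (mul_nonpos_of_nonneg_of_nonpos this.le (by linarith)) e
  have h3 : ∑ i, ∑ j, l i * l j * ⟪u i, u j⟫ * (1 * (2 * (f i * f j))) =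
     2 * ∑ i, ∑ j, (l i * f i) * (l j * f j) * ⟪u i, u j⟫ := by
    simp only [Finset.mul_sum]
    exact Finset.sum_congr rfl fun i _ => Finset.sum_congr rfl fun j _ => by ring
  simp only [Finset.sum_ite_eq, Finset.mem_univ, if_true, ← Finset.mul_sum] at h2
  linarith

lemma half_bound (u : Fin 4 → E3) (hu : ∀ i, ‖u i‖ = 1)
    (l : Fin 4 → ℝ) (hl : ∑ i, l i • u i = 0) (hp : ∀ i, 0 < l i) (hs : ∑ i, l i = 1) (i : Fin 4) :
    l i ≤ 1 / 2 := by
  rw [← Finset.add_sum_erase _ _ (Finset.mem_univ i)] at hl hs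
  have h1 : l i = ‖l i • u i‖ := by rw [norm_smul, hu, Real.norm_of_nonneg (hp i).le, mul_one]
  have h2 : ‖∑ j ∈ Finset.univ.erase i, l j • u j‖ ≤ ∑ j ∈ Finset.univ.erase i, l j := by
    refine norm_sum_le_of_le _ fun j _ => ?_
    rw [norm_smul, hu, Real.norm_of_nonneg (hp j).le, mul_one]
  rw [eq_neg_of_add_eq_zero_left hl, norm_neg] at h1
  linarith

lemma lower (θ : ℝ) (hθ : 0 < θ) (u : Fin 4 → E3) (hu : ∀ i, ‖u i‖ = 1)
    (hinner : ∀ i j : Fin 4, i ≠ j → ⟪u i, u j⟫ ≤ -θ)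
    (l y : Fin 4 → ℝ) (hl : ∑ i, l i • u i = 0) (hp : ∀ i, 0 < l i) (hs : ∑ i, l i = 1)
    (hy : ∑ i, y i = 0) :
    2 * θ * ∑ i, y i ^ 2 ≤ ‖∑ i, y i • u i‖ ^ 2 := by
  obtain ⟨f, rfl⟩ : ∃ f : Fin 4 → ℝ, y = fun i => l i * f i :=
    ⟨fun i => y i / l i, by ext i; have := (hp i).ne'; field_simp⟩
  rw [← real_inner_self_eq_norm_sq, inner_sum_sum]
  have h := dirichlet_aux u l f hl (-1)
  have h2 : ∑ i, ∑ j, l i * l j * ⟪u i, u j⟫ * (f i ^ 2 + f j ^ 2 + (-1) * (2 * (f i * f j)))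
      ≤ ∑ i, ∑ j, l i * l j * (-θ) * (f i ^ 2 + f j ^ 2 + (-1) * (2 * (f i * f j))) := by
    refine Finset.sum_le_sum fun i _ => Finset.sum_le_sum fun j _ => ?_
    by_cases hij : i = j
    · subst hij; apply le_of_eq; ring
    · have := hinner i j hij
      have e : 0 ≤ f i ^ 2 + f j ^ 2 + (-1) * (2 * (f i * f j)) := by nlinarith [sq_nonneg (f i - f j)]
      have := mul_pos (hp i) (hp j)
      gcongr
  have h3 : ∑ i, ∑ j, l i * l j * ⟪u i, u j⟫ * ((-1) * (2 * (f i * f j))) =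
     (-2) * ∑ i, ∑ j, (l i * f i) * (l j * f j) * ⟪u i, u j⟫ := by
    simp only [Finset.mul_sum]
    exact Finset.sum_congr rfl fun i _ => Finset.sum_congr rfl fun j _ => by ring
  have h4 : ∑ i, ∑ j, l i * l j * (-θ) * (f i ^ 2 + f j ^ 2 + (-1) * (2 * (f i * f j))) =
     (-θ) * (2 * (∑ i, l i) * (∑ i, l i * f i ^ 2) - 2 * (∑ i, l i * f i) ^ 2) := by
    simp only [Fin.sum_univ_four]; ring
  rw [hs, hy] at h4
  have h5 : 2 * ∑ i, (l i * f i) ^ 2 ≤ ∑ i, l i * f i ^ 2 := by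
    rw [Finset.mul_sum]
    refine Finset.sum_le_sum fun i _ => ?_
    have := half_bound u hu l hl hp hs i
    have h6 : 0 ≤ l i * f i ^ 2 := mul_nonneg (hp i).le (sq_nonneg _)
    nlinarith
  have := mul_le_mul_of_nonneg_left h5 hθ.le
  linarith

lemma lower' (θ : ℝ) (hθ : 0 < θ) (u : Fin 4 → E3) (hu : ∀ i, ‖u i‖ = 1)
    (hinner : ∀ i j : Fin 4, i ≠ j → ⟪u i, u j⟫ ≤ -θ)
    (l x : Fin 4 → ℝ) (hl : ∑ i, l i • u i = 0) (hp : ∀ i, 0 < l i) (hs : ∑ i, l i = 1)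
    (hx : ∑ i, l i * x i = 0) :
    2 * θ * ∑ i, x i ^ 2 ≤ ‖∑ i, x i • u i‖ ^ 2 := by
  set c := ∑ i, x i with hc
  have h := lower θ hθ u hu hinner l (fun i => x i - c * l i) hl hp hs (by
    rw [Finset.sum_sub_distrib, ← Finset.mul_sum, hs, ← hc]; ring)
  have e : ∑ i, (x i - c * l i) • u i = ∑ i, x i • u i := by
    simp only [sub_smul, Finset.sum_sub_distrib, mul_smul, ← Finset.smul_sum, hl]; simp
  rw [e] at h
  have e2 : ∑ i, (x i - c * l i) ^ 2 = ∑ i, x i ^ 2 - 2 * c * ∑ i, l i * x i + c ^ 2 * ∑ i, l i ^ 2 := by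
    simp only [Fin.sum_univ_four]; ring
  rw [e2, hx] at h
  have : 0 ≤ θ * (c ^ 2 * ∑ i, l i ^ 2) := by positivity
  linarith

lemma eigen_bounds (θ : ℝ) (hθ : 0 < θ) (u : Fin 4 → E3) (hu : ∀ i, ‖u i‖ = 1)
    (hinner : ∀ i j : Fin 4, i ≠ j → ⟪u i, u j⟫ ≤ -θ)
    (l : Fin 4 → ℝ) (hl : ∑ i, l i • u i = 0) (hp : ∀ i, 0 < l i) (hs : ∑ i, l i = 1)
    (v : E3) (hv : v ≠ 0) (m : ℝ) (hm : ∑ i, ⟪u i, v⟫ • u i = m • v) (hm0 : m ≠ 0) :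
    2 * θ ≤ m ∧ m ≤ 2 := by
  have h1 : ∑ i, ⟪u i, v⟫ ^ 2 = m * ‖v‖ ^ 2 := by
    have : ⟪∑ i, ⟪u i, v⟫ • u i, v⟫ = m * ‖v‖ ^ 2 := by
      rw [hm, real_inner_smul_left, real_inner_self_eq_norm_sq]
    rw [← this, sum_inner]
    exact Finset.sum_congr rfl fun i _ => by rw [real_inner_smul_left]; ring
  have hx : ∑ i, l i * ⟪u i, v⟫ = 0 := by
    have : ⟪∑ i, l i • u i, v⟫ = 0 := by rw [hl, inner_zero_left]
    simpa only [sum_inner, real_inner_smul_left] using this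
  have hlo := lower' θ hθ u hu hinner l (fun i => ⟪u i, v⟫) hl hp hs hx
  have hup := upper θ hθ u hu hinner l (fun i => ⟪u i, v⟫) hl hp
  have hn : ‖m • v‖ ^ 2 = m * (m * ‖v‖ ^ 2) := by
    rw [norm_smul, mul_pow, Real.norm_eq_abs, sq_abs]; ring
  simp only [hm, h1, hn] at hlo hup
  have hpos : 0 < m * ‖v‖ ^ 2 := by
    have hvp : 0 < ‖v‖ ^ 2 := by have := norm_pos_iff.mpr hv; positivity
    have h0 : 0 ≤ m * ‖v‖ ^ 2 := by rw [← h1]; positivity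
    exact lt_of_le_of_ne h0 (mul_ne_zero hm0 hvp.ne').symm
  exact ⟨le_of_mul_le_mul_right hlo hpos, le_of_mul_le_mul_right hup hpos⟩

/-- explicit 3×3 determinant -/
def det3 (a b c : E3) : ℝ :=
  a 0 * b 1 * c 2 - a 0 * b 2 * c 1 - a 1 * b 0 * c 2 + a 1 * b 2 * c 0 +
    a 2 * b 0 * c 1 - a 2 * b 1 * c 0

/-- signed minors -/
def cof (u : Fin 4 → E3) : Fin 4 → ℝ :=
  ![det3 (u 1) (u 2) (u 3), -det3 (u 0) (u 2) (u 3), det3 (u 0) (u 1) (u 3),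
    -det3 (u 0) (u 1) (u 2)]

lemma cof_rel (u : Fin 4 → E3) : ∑ i, cof u i • u i = 0 := by
  ext k
  simp only [Fin.sum_univ_four, cof, det3]
  fin_cases k <;> simp <;> ring

lemma det3_ne (θ : ℝ) (hθ : 0 < θ) (u : Fin 4 → E3)
    (hinner : ∀ i j : Fin 4, i ≠ j → ⟪u i, u j⟫ ≤ -θ) : det3 (u 0) (u 1) (u 2) ≠ 0 := by
  intro h
  have hd : (Matrix.of ![fun k => u 0 k, fun k => u 1 k, fun k => u 2 k]).det = 0 := by
    rw [← h, Matrix.det_fin_three, det3]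
    simp
  obtain ⟨t, ht, ht0⟩ := Matrix.exists_vecMul_eq_zero_iff.mpr hd
  have hr : ∑ i, (![t 0, t 1, t 2, 0] : Fin 4 → ℝ) i • u i = 0 := by
    ext k
    have := congrFun ht0 k
    simp [Matrix.vecMul, dotProduct, Fin.sum_univ_three] at this
    simp [Fin.sum_univ_four, this]
  have hne : (![t 0, t 1, t 2, 0] : Fin 4 → ℝ) ≠ 0 := by
    intro h0
    apply ht
    ext k
    have h1 := congrFun h0 0
    have h2 := congrFun h0 1
    have h3 := congrFun h0 2
    simp at h1 h2 h3
    fin_cases k <;> simp [h1, h2, h3]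
  rcases rel_sign θ hθ u hinner _ hr hne with h | h
  · have := h 3; simp at this
  · have := h 3; simp at this

lemma prod_bound (θ a b c : ℝ) (hθ : 0 < θ) (ha : 2 * θ ≤ a) (hb : 2 * θ ≤ b) (hc : 2 * θ ≤ c)
    (ha2 : a ≤ 2) (hb2 : b ≤ 2) (hc2 : c ≤ 2) (hs : a + b + c = 4) :
    9 / 4 * θ ≤ a * b * c := by
  wlog hab : a ≤ b generalizing a b c
  · have := this b a c hb ha hc hb2 ha2 hc2 (by linarith) (by linarith); linarith
  wlog hac : a ≤ c generalizing a b c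
  · have := this c b a hc hb ha hc2 hb2 ha2 (by linarith) (by linarith) (by linarith); linarith
  have h1 : 2 * (2 - a) ≤ b * c := by nlinarith [mul_nonneg (sub_nonneg.mpr hb2) (sub_nonneg.mpr hc2)]
  have h2 : 4 / 3 ≤ b * c := by linarith
  nlinarith

lemma sum_sq_bound (θ : ℝ) (hθ : 0 < θ) (u : Fin 4 → E3) (hu : ∀ i, ‖u i‖ = 1)
    (hinner : ∀ i j : Fin 4, i ≠ j → ⟪u i, u j⟫ ≤ -θ)
    (l : Fin 4 → ℝ) (hl : ∑ i, l i • u i = 0) (hp : ∀ i, 0 < l i) (hs : ∑ i, l i = 1) :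
    9 / 4 * θ ≤ ∑ i, cof u i ^ 2 := by
  set A : Matrix (Fin 4) (Fin 3) ℝ := Matrix.of fun i k => u i k with hA
  have hM : (A.transpose * A).IsHermitian := by
    have := Matrix.isHermitian_conjTranspose_mul_self A
    rwa [Matrix.conjTranspose_eq_transpose_of_trivial] at this
  have hdet : (A.transpose * A).det = ∑ i, cof u i ^ 2 := by
    rw [Matrix.det_fin_three]
    simp only [Matrix.mul_apply, Matrix.transpose_apply, Fin.sum_univ_four, cof, det3, hA,
      Matrix.of_apply, Matrix.cons_val]
    ring
  have htr : (A.transpose * A).trace = 4 := by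
    have h : ∀ i, u i 0 ^ 2 + u i 1 ^ 2 + u i 2 ^ 2 = 1 := by
      intro i
      have := EuclideanSpace.real_norm_sq_eq (u i)
      rw [hu, Fin.sum_univ_three] at this
      linarith
    rw [Matrix.trace_fin_three]
    simp only [Matrix.mul_apply, Matrix.transpose_apply, Fin.sum_univ_four, hA,
      Matrix.of_apply]
    linarith [h 0, h 1, h 2, h 3]
  have hd0 : (A.transpose * A).det ≠ 0 := by
    rw [hdet]
    have h3 : cof u 3 ≠ 0 := neg_ne_zero.mpr (det3_ne θ hθ u hinner)
    rw [Fin.sum_univ_four]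
    positivity
  have hb : ∀ j, 2 * θ ≤ hM.eigenvalues j ∧ hM.eigenvalues j ≤ 2 := by
    intro j
    refine eigen_bounds θ hθ u hu hinner l hl hp hs (hM.eigenvectorBasis j)
      (hM.eigenvectorBasis.orthonormal.ne_zero j) _ ?_ ?_
    · have h := hM.mulVec_eigenvectorBasis j
      generalize (hM.eigenvectorBasis j) = v at h
      ext k
      have := congrFun h k
      rw [← Matrix.mulVec_mulVec] at this
      simp [Matrix.mulVec, dotProduct, Fin.sum_univ_four, Fin.sum_univ_three, hA] at this
      simp [Fin.sum_univ_four, PiLp.inner_apply, Fin.sum_univ_three]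
      linarith
    · intro h0
      apply hd0
      rw [hM.det_eq_prod_eigenvalues]
      exact Finset.prod_eq_zero (Finset.mem_univ j) (by simp [h0])
  have hp' := hM.det_eq_prod_eigenvalues
  have ht' := hM.trace_eq_sum_eigenvalues
  rw [htr, Fin.sum_univ_three] at ht'
  rw [Fin.prod_univ_three] at hp'
  simp only [RCLike.ofReal_real_eq_id, id_eq] at hp' ht'
  rw [← hdet, hp']
  exact prod_bound θ _ _ _ hθ (hb 0).1 (hb 1).1 (hb 2).1 (hb 0).2 (hb 1).2 (hb 2).2 ht'.symm

open MeasureTheory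

/-- Kuhn simplex -/
def kuhn : Set (Fin 3 → ℝ) := {x | 0 ≤ x 0 ∧ x 0 ≤ x 1 ∧ x 1 ≤ x 2 ∧ x 2 ≤ 1}

lemma kuhn_perm (σ : Equiv.Perm (Fin 3)) :
    volume {x : Fin 3 → ℝ | (fun i => x (σ i)) ∈ kuhn} = volume kuhn := by
  have h := volume_measurePreserving_piCongrLeft (fun _ : Fin 3 => ℝ) σ.symm
  rw [← h.measure_preimage_equiv kuhn]
  congr 1
  ext x
  have : (MeasurableEquiv.piCongrLeft (fun _ : Fin 3 => ℝ) σ.symm) x = fun i => x (σ i) := by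
    ext i
    have := Equiv.piCongrLeft_apply_apply (fun _ : Fin 3 => ℝ) σ.symm x (σ i)
    rw [MeasurableEquiv.coe_piCongrLeft]
    simpa using this
  simp only [Set.mem_ofPred_eq, Set.mem_preimage, this]

lemma kuhn_volume : ENNReal.ofReal (1 / 6) ≤ volume kuhn := by
  have hsub : Set.Icc (0 : Fin 3 → ℝ) 1 ⊆
      ⋃ σ ∈ (Finset.univ : Finset (Equiv.Perm (Fin 3))), {x | (fun i => x (σ i)) ∈ kuhn} := by
    intro x hx
    simp only [Finset.mem_univ, Set.iUnion_true, Set.mem_iUnion, Set.mem_ofPred_eq]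
    have hm := Tuple.monotone_sort x
    refine ⟨Tuple.sort x, hx.1 _, hm (by decide), hm (by decide), hx.2 _⟩
  have h1 := (measure_mono (μ := volume) hsub).trans (measure_biUnion_finset_le _ _)
  simp only [kuhn_perm, Real.volume_Icc_pi] at h1
  simp [Fintype.card_perm, Nat.factorial] at h1
  rw [one_div, ENNReal.ofReal_inv_of_pos (by norm_num)]
  rw [ENNReal.inv_le_iff_le_mul] <;> simp [h1]

lemma simplex_volume (u : Fin 4 → E3) :
    ENNReal.ofReal (|∑ i, cof u i| / 6) ≤ volume (convexHull ℝ (Set.range u)) := by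
  set B : Matrix (Fin 3) (Fin 3) ℝ :=
    Matrix.of fun k => ![u 3 k - u 2 k, u 2 k - u 1 k, u 1 k - u 0 k] with hB
  have hdet : |B.det| = |∑ i, cof u i| := by
    have : B.det = ∑ i, cof u i ∨ B.det = - ∑ i, cof u i := by
      rw [Matrix.det_fin_three]
      simp only [Fin.sum_univ_four, cof, det3, hB, Matrix.of_apply, Matrix.cons_val]
      right
      ring
    rcases this with h | h
    · rw [h]
    · rw [h, abs_neg]
  have hpre : volume (convexHull ℝ (Set.range u)) =
      volume ((fun x => x + WithLp.ofLp (u 0)) ⁻¹' (WithLp.toLp 2 ⁻¹' (convexHull ℝ (Set.range u)))) := by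
    rw [measure_preimage_add_right]
    exact ((PiLp.volume_preserving_toLp (Fin 3)).measure_preimage_equiv
      (f := MeasurableEquiv.toLp 2 (Fin 3 → ℝ)) _).symm
  have hsub : Matrix.toLin' B '' kuhn ⊆
      ((fun x => x + WithLp.ofLp (u 0)) ⁻¹' (WithLp.toLp 2 ⁻¹' (convexHull ℝ (Set.range u)))) := by
    rintro _ ⟨x, ⟨h0, h1, h2, h3⟩, rfl⟩
    have hmem : ∑ i, (![1 - x 2, x 2 - x 1, x 1 - x 0, x 0] : Fin 4 → ℝ) i • u i ∈
        convexHull ℝ (Set.range u) := by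
      refine (convex_convexHull ℝ _).sum_mem ?_ ?_
        (fun i _ => subset_convexHull ℝ _ (Set.mem_range_self i))
      · intro i _
        fin_cases i <;> simp <;> linarith
      · simp [Fin.sum_univ_four]
    simp only [Set.mem_preimage]
    convert hmem using 1
    ext k
    simp [Fin.sum_univ_four, Matrix.mulVec, dotProduct, Fin.sum_univ_three, hB]
    ring
  rw [hpre]
  refine le_trans ?_ (measure_mono hsub)
  rw [Measure.addHaar_image_linearMap, LinearMap.det_toLin', hdet, div_eq_mul_one_div,
    ENNReal.ofReal_mul (abs_nonneg _)]
  gcongr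
  exact kuhn_volume

lemma tetrahedron_aux (θ : ℝ) (hθ : 0 < θ) (u : Fin 4 → E3) (hu : ∀ i, ‖u i‖ = 1)
    (hinner : ∀ i j : Fin 4, i ≠ j → ⟪u i, u j⟫ ≤ -θ) :
    9 / 4 * θ ≤ (∑ i, cof u i) ^ 2 := by
  obtain ⟨c, hc, hcp, hcs⟩ : ∃ c : Fin 4 → ℝ, ∑ i, c i • u i = 0 ∧ (∀ i, 0 < c i) ∧
      (c = cof u ∨ c = - cof u) := by
    have hne : cof u ≠ 0 := by
      intro h
      exact neg_ne_zero.mpr (det3_ne θ hθ u hinner) (congrFun h 3)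
    rcases rel_sign θ hθ u hinner _ (cof_rel u) hne with h | h
    · exact ⟨_, cof_rel u, h, Or.inl rfl⟩
    · exact ⟨-cof u, by simp [cof_rel], h, Or.inr rfl⟩
  have hS : 0 < ∑ i, c i := Finset.sum_pos (fun i _ => hcp i) Finset.univ_nonempty
  have hb := sum_sq_bound θ hθ u hu hinner (fun i => (∑ i, c i)⁻¹ * c i)
    (by simp only [mul_smul, ← Finset.smul_sum, hc, smul_zero])
    (fun i => mul_pos (inv_pos.mpr hS) (hcp i))
    (by rw [← Finset.mul_sum]; exact inv_mul_cancel₀ hS.ne')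
  have e1 : ∑ i, cof u i ^ 2 = ∑ i, c i ^ 2 := by
    rcases hcs with h | h <;> simp [h]
  have e2 : (∑ i, cof u i) ^ 2 = (∑ i, c i) ^ 2 := by
    rcases hcs with h | h <;> simp [h]
  rw [e1] at hb
  rw [e2]
  refine hb.trans ?_
  have hm : ∀ i j, 0 < c i * c j := fun i j => mul_pos (hcp i) (hcp j)
  simp only [Fin.sum_univ_four]
  nlinarith [hm 0 1, hm 0 2, hm 0 3, hm 1 2, hm 1 3, hm 2 3]

/-- Volume of a well-spread spherical tetrahedron: if `θ ∈ (0, 1/3)` and four unit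
vectors in `ℝ³` have pairwise inner products at most `-θ`, then the volume of their
convex hull is at least `√θ/4`. -/
theorem tetrahedron_volume (θ : ℝ) (hθ : θ ∈ Set.Ioo (0 : ℝ) (1 / 3))
    (u : Fin 4 → EuclideanSpace ℝ (Fin 3))
    (hu : ∀ i, ‖u i‖ = 1)
    (hinner : ∀ i j : Fin 4, i ≠ j → ⟪u i, u j⟫ ≤ -θ) :
    ENNReal.ofReal (Real.sqrt θ / 4) ≤
      MeasureTheory.volume (convexHull ℝ (Set.range u)) := by
  refine le_trans (ENNReal.ofReal_le_ofReal ?_) (simplex_volume u)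
  have h := tetrahedron_aux θ hθ.1 u hu hinner
  have h2 : 3 / 2 * Real.sqrt θ ≤ |∑ i, cof u i| := by
    apply le_abs_self _ |>.trans
    apply sq_le_sq.mp
    rw [mul_pow, Real.sq_sqrt hθ.1.le]
    linarith
  linarith
end
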